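/- arXiv:2003.04425 — 2 statements merged into one kernel-verified Lean document; each statement's English description precedes it below -/
import Mathlib

section
/- Let σ > 0 and N ≥ 1. Among nondecreasing functions with values in [m, M], equation (C⁺) admits a maximal solution R*, i.e. a nondecreasing solution satisfying R*(x) ≥ r(x) for every x ∈ ℝ whenever r is a nondecreasing solution of (C⁺) with values in [m, M]. This maximal solution is not constant, and every solution F of equation (E) with values in [m, M] satisfies F(x) ≤ R*(x) for all x ∈ ℝ. -/
open MeasureTheory Filter Set

/-- Centered Gaussian density with variance `σ²`. -/
noncomputable def gq (σ z : ℝ) : ℝ :=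
  Real.exp (-(z ^ 2) / (2 * σ ^ 2)) / (σ * Real.sqrt (2 * Real.pi))

/-- The averaged kernel `q̄(σ,x,z)`. -/
noncomputable def gqbar (σ x z : ℝ) : ℝ :=
  if x = 0 then gq σ z else (1 / x) * ∫ y in (0:ℝ)..x, gq σ (y - z)

/-- `Φ⁺(y) = E[V·1_{V>y}]`. -/
noncomputable def Phip {Ω : Type*} [MeasurableSpace Ω] (P : Measure Ω) (V : Ω → ℝ) (y : ℝ) : ℝ :=
  ∫ ω in {ω | V ω > y}, V ω ∂P

/-- `Π⁺(y) = P(V > y)`. -/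
noncomputable def Pip {Ω : Type*} [MeasurableSpace Ω] (P : Measure Ω) (V : Ω → ℝ) (y : ℝ) : ℝ :=
  (P {ω | V ω > y}).toReal

/-- `Φ⁻(y) = E[V·1_{V≤y}]`. -/
noncomputable def Phim {Ω : Type*} [MeasurableSpace Ω] (P : Measure Ω) (V : Ω → ℝ) (y : ℝ) : ℝ :=
  ∫ ω in {ω | V ω ≤ y}, V ω ∂P

/-- `Π⁻(y) = P(V ≤ y)`. -/
noncomputable def Pim {Ω : Type*} [MeasurableSpace Ω] (P : Measure Ω) (V : Ω → ℝ) (y : ℝ) : ℝ :=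
  (P {ω | V ω ≤ y}).toReal

/-- `Ψ⁺ = Φ⁺/Π⁺`. -/
noncomputable def Psip {Ω : Type*} [MeasurableSpace Ω] (P : Measure Ω) (V : Ω → ℝ) (y : ℝ) : ℝ :=
  Phip P V y / Pip P V y

/-- `Ψ⁻ = Φ⁻/Π⁻`. -/
noncomputable def Psim {Ω : Type*} [MeasurableSpace Ω] (P : Measure Ω) (V : Ω → ℝ) (y : ℝ) : ℝ :=
  Phim P V y / Pim P V y

/-- `φ⁺_g`. -/
noncomputable def phip {Ω : Type*} [MeasurableSpace Ω] (P : Measure Ω) (V : Ω → ℝ)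
    (σ : ℝ) (g : ℝ → ℝ) (x : ℝ) : ℝ :=
  (∫ z, Phip P V (g z) * gq σ (x - z)) / (∫ z, Pip P V (g z) * gq σ (x - z))

/-- `φ⁻_g`. -/
noncomputable def phim {Ω : Type*} [MeasurableSpace Ω] (P : Measure Ω) (V : Ω → ℝ)
    (σ : ℝ) (g : ℝ → ℝ) (x : ℝ) : ℝ :=
  (∫ z, Phim P V (g z) * gq σ (x - z)) / (∫ z, Pim P V (g z) * gq σ (x - z))

/-- `φ_g`, equal to `φ⁺_g` on `[0,∞)` and `φ⁻_g` on `(−∞,0)`. -/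
noncomputable def phig {Ω : Type*} [MeasurableSpace Ω] (P : Measure Ω) (V : Ω → ℝ)
    (σ : ℝ) (g : ℝ → ℝ) (x : ℝ) : ℝ :=
  if 0 ≤ x then phip P V σ g x else phim P V σ g x

/-- The interior of the support of the law of `V` is `(m, M)` (with `V` bounded). -/
def SuppIoo {Ω : Type*} [MeasurableSpace Ω] (P : Measure Ω) (V : Ω → ℝ) (m M : ℝ) : Prop :=
  m < M ∧ (∀ᵐ ω ∂P, V ω ∈ Set.Icc m M) ∧
    (∀ y < M, 0 < P {ω | V ω > y}) ∧ (∀ y, m < y → 0 < P {ω | V ω ≤ y})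

/-- Equation (E). -/
def SolvesE {Ω : Type*} [MeasurableSpace Ω] (P : Measure Ω) (V : Ω → ℝ)
    (σ : ℝ) (N : ℕ) (F : ℝ → ℝ) : Prop :=
  ∀ x : ℝ, F x =
    ∫ z, ((1 / (N:ℝ)) * gq σ (x - z) + (((N:ℝ) - 1) / (N:ℝ)) * gqbar σ x z) * phig P V σ F z

/-- Equation (C⁺). -/
def SolvesCp {Ω : Type*} [MeasurableSpace Ω] (P : Measure Ω) (V : Ω → ℝ)
    (σ : ℝ) (N : ℕ) (R : ℝ → ℝ) : Prop :=
  ∀ x : ℝ, R x =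
    (∫ z in Set.Ioi (0:ℝ),
      ((1 / (N:ℝ)) * gq σ (x - z) + (((N:ℝ) - 1) / (N:ℝ)) * gqbar σ x z) *
        ∫ y, Psip P V (R y) * gq σ (z - y)) +
    (∫ ω, V ω ∂P) *
      ∫ z in Set.Iio (0:ℝ),
        ((1 / (N:ℝ)) * gq σ (x - z) + (((N:ℝ) - 1) / (N:ℝ)) * gqbar σ x z)

open ProbabilityTheory

noncomputable def gam (σ : ℝ) : Measure ℝ := gaussianReal 0 (Real.toNNReal (σ ^ 2))

instance gam_prob (σ : ℝ) : IsProbabilityMeasure (gam σ) := by unfold gam; infer_instance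

lemma gq_eq {σ : ℝ} (hσ : 0 < σ) (z : ℝ) :
    gq σ z = gaussianPDFReal 0 (Real.toNNReal (σ ^ 2)) z := by
  have h0 : (0:ℝ) ≤ σ ^ 2 := by positivity
  have h1 : √(2 * Real.pi * σ ^ 2) = σ * √(2 * Real.pi) := by
    rw [Real.sqrt_mul (by positivity), Real.sqrt_sq hσ.le, mul_comm]
  simp only [gq, gaussianPDFReal, Real.coe_toNNReal _ h0, sub_zero, h1]
  rw [div_eq_inv_mul]

lemma gq_pos {σ : ℝ} (hσ : 0 < σ) (z : ℝ) : 0 < gq σ z := by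
  unfold gq; positivity

lemma gq_even (σ z : ℝ) : gq σ (-z) = gq σ z := by simp [gq]

lemma gq_cont (σ : ℝ) : Continuous (gq σ) := by
  unfold gq; fun_prop

lemma v_ne {σ : ℝ} (hσ : 0 < σ) : Real.toNNReal (σ ^ 2) ≠ 0 := by
  have : 0 < σ ^ 2 := by positivity
  simpa using this.ne'

/-- Convolution with the Gaussian density as an expectation. -/
lemma conv_eq {σ : ℝ} (hσ : 0 < σ) (f : ℝ → ℝ) (x : ℝ) :
    ∫ z, f z * gq σ (x - z) = ∫ w, f (x + w) ∂(gam σ) := by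
  unfold gam
  rw [integral_gaussianReal_eq_integral_smul (v_ne hσ)]
  rw [← integral_add_left_eq_self (fun z => f z * gq σ (x - z)) x]
  congr 1; ext w
  rw [← gq_eq hσ, smul_eq_mul, mul_comm, ← gq_even]; congr 2; ring

lemma int_gq {σ : ℝ} (hσ : 0 < σ) (x : ℝ) : ∫ z, gq σ (x - z) = 1 := by
  have := conv_eq hσ (fun _ => 1) x
  simpa using this

lemma integrable_gq {σ : ℝ} (hσ : 0 < σ) (x : ℝ) : Integrable (fun z => gq σ (x - z)) := by
  by_contra h
  have := int_gq hσ x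
  rw [integral_undef h] at this
  norm_num at this

lemma gam_ac {σ : ℝ} (hσ : 0 < σ) : (volume : Measure ℝ) ≪ gam σ :=
  gaussianReal_absolutelyContinuous' 0 (v_ne hσ)

lemma gqbar_eq (σ x z : ℝ) : gqbar σ x z = ∫ u in (0:ℝ)..1, gq σ (u * x - z) := by
  unfold gqbar
  split_ifs with h
  · subst h; simp [gq_even]
  · have := intervalIntegral.integral_comp_mul_right (a := 0) (b := 1) (fun y => gq σ (y - z)) h
    simp only [zero_mul, one_mul] at this
    rw [this, one_div, smul_eq_mul]

noncomputable def nu (N : ℕ) : Measure ℝ :=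
  ENNReal.ofReal (1 / (N:ℝ)) • Measure.dirac (1:ℝ) +
    ENNReal.ofReal (((N:ℝ) - 1) / N) • (volume.restrict (Set.Ioc (0:ℝ) 1))

lemma nu_prob {N : ℕ} (hN : 1 ≤ N) : IsProbabilityMeasure (nu N) := by
  constructor
  have h1 : (1:ℝ) ≤ N := by exact_mod_cast hN
  simp only [nu, Measure.add_apply, Measure.smul_apply, measure_univ, smul_eq_mul, mul_one,
    Measure.restrict_apply_univ, Real.volume_Ioc, sub_zero, ENNReal.ofReal_one]
  rw [← ENNReal.ofReal_add (by positivity) (div_nonneg (by linarith) (by positivity))]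
  rw [← ENNReal.ofReal_one]; congr 1; field_simp; ring

lemma nu_ae (N : ℕ) : ∀ᵐ u ∂(nu N), 0 < u := by
  unfold nu
  rw [ae_add_measure_iff]
  constructor
  · apply Measure.ae_smul_measure
    rw [ae_dirac_iff measurableSet_Ioi]; norm_num
  · apply Measure.ae_smul_measure
    filter_upwards [ae_restrict_mem measurableSet_Ioc] with u hu using hu.1

lemma bdd_integrable {α : Type*} [MeasurableSpace α] (μ : Measure α) [IsFiniteMeasure μ]
    {f : α → ℝ} (hf : Measurable f) {C : ℝ} (hC : ∀ x, |f x| ≤ C) : Integrable f μ :=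
  Integrable.of_bound hf.aestronglyMeasurable C (Filter.Eventually.of_forall hC)

noncomputable def Aop (σ : ℝ) (N : ℕ) (h : ℝ → ℝ) (x : ℝ) : ℝ :=
  ∫ p, h (p.1 * x + p.2) ∂((nu N).prod (gam σ))

lemma gq_cont2 (σ x : ℝ) : Continuous fun p : ℝ × ℝ => gq σ (p.1 * x - p.2) :=
  (gq_cont σ).comp (by fun_prop)

lemma kernel_int0 {σ : ℝ} (hσ : 0 < σ) (x : ℝ) :
    Integrable (fun p : ℝ × ℝ => gq σ (p.1 * x - p.2))
      ((volume.restrict (Set.Ioc (0:ℝ) 1)).prod volume) := by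
  rw [integrable_prod_iff (gq_cont2 σ x).aestronglyMeasurable]
  constructor
  · exact Filter.Eventually.of_forall fun u => integrable_gq hσ (u * x)
  · have : (fun u : ℝ => ∫ z, ‖gq σ (u * x - z)‖) = fun _ => 1 := by
      ext u
      simp only [Real.norm_eq_abs, abs_of_pos (gq_pos hσ _)]
      rw [int_gq hσ]
    simp only [this]
    exact integrable_const _

lemma kernel_int {σ : ℝ} (hσ : 0 < σ) (x : ℝ) {h : ℝ → ℝ} (hm : Measurable h)
    {C : ℝ} (hC : ∀ x, |h x| ≤ C) :
    Integrable (Function.uncurry fun (u z : ℝ) => gq σ (u * x - z) * h z)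
      ((volume.restrict (Set.Ioc (0:ℝ) 1)).prod volume) := by
  have h1 : Integrable (fun p : ℝ × ℝ => h p.2 * gq σ (p.1 * x - p.2))
      ((volume.restrict (Set.Ioc (0:ℝ) 1)).prod volume) :=
    (kernel_int0 hσ x).bdd_mul (hm.comp measurable_snd).aestronglyMeasurable
      (Filter.Eventually.of_forall fun p => hC p.2)
  refine h1.congr (Filter.Eventually.of_forall fun p => ?_)
  simp only [Function.uncurry]
  ring

lemma gqbar_int {σ : ℝ} (hσ : 0 < σ) (x : ℝ) {h : ℝ → ℝ} (hm : Measurable h)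
    {C : ℝ} (hC : ∀ x, |h x| ≤ C) :
    Integrable (fun z => gqbar σ x z * h z) ∧
    ∫ z, gqbar σ x z * h z =
      ∫ u in Set.Ioc (0:ℝ) 1, ∫ w, h (u * x + w) ∂(gam σ) := by
  have hk := kernel_int hσ x hm hC
  have e : ∀ z, gqbar σ x z * h z = ∫ u in Set.Ioc (0:ℝ) 1, gq σ (u * x - z) * h z := by
    intro z
    rw [gqbar_eq, intervalIntegral.integral_of_le zero_le_one, integral_mul_const]
  constructor
  · simp_rw [e]
    exact hk.integral_prod_right
  · simp_rw [e]
    rw [← integral_integral_swap hk]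
    congr 1; ext u
    rw [← conv_eq hσ]
    congr 1; ext z; ring

lemma A_integrable {σ : ℝ} {N : ℕ} (hN : 1 ≤ N) (x : ℝ) {h : ℝ → ℝ}
    (hm : Measurable h) {C : ℝ} (hC : ∀ x, |h x| ≤ C) :
    Integrable (fun p : ℝ × ℝ => h (p.1 * x + p.2)) ((nu N).prod (gam σ)) := by
  have := nu_prob hN
  exact bdd_integrable _ (by fun_prop) fun p => hC _

lemma K_eq {σ : ℝ} (hσ : 0 < σ) {N : ℕ} (hN : 1 ≤ N) (x : ℝ) {h : ℝ → ℝ} (hm : Measurable h)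
    {C : ℝ} (hC : ∀ x, |h x| ≤ C) :
    Integrable (fun z => ((1 / (N:ℝ)) * gq σ (x - z) +
      (((N:ℝ) - 1) / (N:ℝ)) * gqbar σ x z) * h z) ∧
    ∫ z, ((1 / (N:ℝ)) * gq σ (x - z) + (((N:ℝ) - 1) / (N:ℝ)) * gqbar σ x z) * h z
      = Aop σ N h x := by
  have := nu_prob hN
  have h1 : (1:ℝ) ≤ N := by exact_mod_cast hN
  obtain ⟨i2, e2⟩ := gqbar_int hσ x hm hC
  have i1 : Integrable (fun z => h z * gq σ (x - z)) :=
    (integrable_gq hσ x).bdd_mul hm.aestronglyMeasurable (Filter.Eventually.of_forall hC)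
  have e1 := conv_eq hσ h x
  have er : ∀ z, ((1 / (N:ℝ)) * gq σ (x - z) + (((N:ℝ) - 1) / (N:ℝ)) * gqbar σ x z) * h z
      = (1 / (N:ℝ)) * (h z * gq σ (x - z)) + (((N:ℝ) - 1) / (N:ℝ)) * (gqbar σ x z * h z) := by
    intro z; ring
  simp_rw [er]
  refine ⟨(i1.const_mul _).add (i2.const_mul _), ?_⟩
  rw [integral_add (i1.const_mul _) (i2.const_mul _), integral_const_mul, integral_const_mul,
    e1, e2]
  unfold Aop
  rw [integral_prod _ (A_integrable hN x hm hC)]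
  have hG := (A_integrable (σ := σ) hN x hm hC).integral_prod_left
  have hG' := hG
  unfold nu at hG' ⊢
  rw [integral_add_measure hG'.left_of_add_measure hG'.right_of_add_measure,
    integral_smul_measure, integral_smul_measure, integral_dirac,
    ENNReal.toReal_ofReal (by positivity),
    ENNReal.toReal_ofReal (div_nonneg (by linarith) (by positivity))]
  simp

lemma A_mono {σ : ℝ} {N : ℕ} (hN : 1 ≤ N) (x : ℝ) {h g : ℝ → ℝ}
    (hm : Measurable h) {C : ℝ} (hC : ∀ x, |h x| ≤ C)
    (gm : Measurable g) {D : ℝ} (hD : ∀ x, |g x| ≤ D) (hle : ∀ z, h z ≤ g z) :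
    Aop σ N h x ≤ Aop σ N g x :=
  integral_mono (A_integrable hN x hm hC) (A_integrable hN x gm hD) fun _ => hle _

lemma A_const {σ : ℝ} {N : ℕ} (hN : 1 ≤ N) (x c : ℝ) : Aop σ N (fun _ => c) x = c := by
  have := nu_prob hN
  simp [Aop]

lemma A_monotone {σ : ℝ} {N : ℕ} (hN : 1 ≤ N) {h : ℝ → ℝ}
    (hmo : Monotone h) {C : ℝ} (hC : ∀ x, |h x| ≤ C) : Monotone (Aop σ N h) := by
  have := nu_prob hN
  intro x y hxy
  refine integral_mono_ae (A_integrable hN x hmo.measurable hC)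
    (A_integrable hN y hmo.measurable hC) ?_
  have : ∀ᵐ p ∂((nu N).prod (gam σ)), 0 < p.1 :=
    Measure.quasiMeasurePreserving_fst.ae (nu_ae N)
  filter_upwards [this] with p hp
  apply hmo
  gcongr

lemma A_meas {σ : ℝ} {N : ℕ} (hN : 1 ≤ N) {h : ℝ → ℝ} (hm : Measurable h) :
    Measurable (Aop σ N h) := by
  have := nu_prob hN
  have : StronglyMeasurable (Function.uncurry fun (x : ℝ) (p : ℝ × ℝ) => h (p.1 * x + p.2)) := by
    apply Measurable.stronglyMeasurable
    exact hm.comp (by fun_prop)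
  exact this.integral_prod_right.measurable

lemma A_top {σ : ℝ} {N : ℕ} (hN : 1 ≤ N) {h : ℝ → ℝ} (hm : Measurable h) {C : ℝ}
    (hC : ∀ x, |h x| ≤ C) {L : ℝ} (hL : Tendsto h atTop (nhds L)) :
    Tendsto (Aop σ N h) atTop (nhds L) := by
  have := nu_prob hN
  have e : L = ∫ p, L ∂((nu N).prod (gam σ)) := by simp
  rw [e]
  refine tendsto_integral_filter_of_dominated_convergence (fun _ => C) ?_ ?_
    (integrable_const _) ?_
  · exact Filter.Eventually.of_forall fun x => (A_integrable hN x hm hC).aestronglyMeasurable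
  · exact Filter.Eventually.of_forall fun x => Filter.Eventually.of_forall fun p => hC _
  · have : ∀ᵐ p ∂((nu N).prod (gam σ)), 0 < p.1 :=
      Measure.quasiMeasurePreserving_fst.ae (nu_ae N)
    filter_upwards [this] with p hp
    exact hL.comp (tendsto_atTop_add_const_right _ _ (tendsto_id.const_mul_atTop hp))

lemma A_bot {σ : ℝ} {N : ℕ} (hN : 1 ≤ N) {h : ℝ → ℝ} (hm : Measurable h) {C : ℝ}
    (hC : ∀ x, |h x| ≤ C) {L : ℝ} (hL : Tendsto h atBot (nhds L)) :
    Tendsto (Aop σ N h) atBot (nhds L) := by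
  have := nu_prob hN
  have e : L = ∫ p, L ∂((nu N).prod (gam σ)) := by simp
  rw [e]
  refine tendsto_integral_filter_of_dominated_convergence (fun _ => C) ?_ ?_
    (integrable_const _) ?_
  · exact Filter.Eventually.of_forall fun x => (A_integrable hN x hm hC).aestronglyMeasurable
  · exact Filter.Eventually.of_forall fun x => Filter.Eventually.of_forall fun p => hC _
  · have : ∀ᵐ p ∂((nu N).prod (gam σ)), 0 < p.1 :=
      Measure.quasiMeasurePreserving_fst.ae (nu_ae N)
    filter_upwards [this] with p hp
    exact hL.comp (tendsto_atBot_add_const_right _ _ (tendsto_id.const_mul_atBot hp))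

lemma A_lt {σ : ℝ} (hσ : 0 < σ) {N : ℕ} (hN : 1 ≤ N) {h : ℝ → ℝ} (hm : Measurable h) {C : ℝ}
    (hC : ∀ x, |h x| ≤ C) {M : ℝ} (hM : ∀ z, h z ≤ M) (hneg : ∀ z < 0, h z < M) (x : ℝ) :
    Aop σ N h x < M := by
  have := nu_prob hN
  have hle : Aop σ N h x ≤ M := by
    calc _ ≤ Aop σ N (fun _ => M) x :=
          A_mono hN x hm hC measurable_const (D := |M|) (fun _ => le_rfl) hM
      _ = M := A_const hN x M
  refine lt_of_le_of_ne hle fun heq => ?_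
  have hi := A_integrable (σ := σ) hN x hm hC
  have h0 : ∫ p : ℝ × ℝ, (M - h (p.1 * x + p.2)) ∂((nu N).prod (gam σ)) = 0 := by
    rw [integral_sub (integrable_const _) hi]
    unfold Aop at heq
    rw [heq]; simp
  rw [integral_eq_zero_iff_of_nonneg (f := fun p : ℝ × ℝ => M - h (p.1 * x + p.2))
    (fun p => by simpa using hM _) ((integrable_const _).sub hi)] at h0
  have h1 := Measure.ae_ae_of_ae_prod h0
  obtain ⟨u, hu⟩ := h1.exists
  have h2 := (gam_ac hσ).ae_le hu
  have h3 : ∀ᵐ w : ℝ, ¬ (w < -(u * x)) := by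
    filter_upwards [h2] with w hw hlt
    have := hneg (u * x + w) (by linarith)
    simp at hw
    linarith
  rw [ae_iff] at h3
  simp only [not_not] at h3
  have : volume (Set.Iio (-(u*x))) = 0 := h3
  simp at this
section Vsec
variable {Ω : Type*} [MeasurableSpace Ω] {P : Measure Ω} [IsProbabilityMeasure P]
  {V : Ω → ℝ} {m M : ℝ}

lemma gt_meas (hVm : Measurable V) (y : ℝ) : MeasurableSet {ω | V ω > y} :=
  hVm measurableSet_Ioi

lemma Phip_sub (hV : Integrable V P) (c y : ℝ) :
    ∫ ω in {ω | V ω > y}, (V ω - c) ∂P = Phip P V y - c * Pip P V y := by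
  rw [integral_sub hV.integrableOn (integrable_const _)]
  simp [Phip, Pip, Measure.real, mul_comm]

lemma compl_eq (y : ℝ) : {ω | V ω ≤ y} = {ω | V ω > y}ᶜ := by
  ext ω; simp

lemma Phim_eq (hVm : Measurable V) (hV : Integrable V P) (y : ℝ) :
    Phim P V y = (∫ ω, V ω ∂P) - Phip P V y := by
  have := integral_add_compl (gt_meas hVm y) hV
  rw [← compl_eq] at this
  unfold Phim Phip
  linarith

lemma Pim_eq (hVm : Measurable V) (y : ℝ) : Pim P V y = 1 - Pip P V y := by
  have := prob_compl_eq_one_sub (μ := P) (gt_meas hVm y)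
  unfold Pim Pip
  rw [compl_eq, this, ENNReal.toReal_sub_of_le prob_le_one (by simp)]
  simp

lemma Pip_nonneg (y : ℝ) : 0 ≤ Pip P V y := ENNReal.toReal_nonneg

lemma Pip_le_one (y : ℝ) : Pip P V y ≤ 1 := by
  have : P {ω | V ω > y} ≤ 1 := prob_le_one
  unfold Pip
  exact ENNReal.toReal_le_of_le_ofReal zero_le_one (by simpa using this)

lemma Pip_anti : Antitone (Pip P V) := by
  intro a b hab
  refine ENNReal.toReal_mono (measure_ne_top _ _) (measure_mono fun ω (h : V ω > b) => ?_)
  exact lt_of_le_of_lt hab h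

lemma Pip_pos (hs : SuppIoo P V m M) {y : ℝ} (hy : y < M) : 0 < Pip P V y :=
  ENNReal.toReal_pos (hs.2.2.1 y hy).ne' (measure_ne_top _ _)

lemma Pim_pos (hs : SuppIoo P V m M) {y : ℝ} (hy : m < y) : 0 < Pim P V y :=
  ENNReal.toReal_pos (hs.2.2.2 y hy).ne' (measure_ne_top _ _)

lemma gt_null (hs : SuppIoo P V m M) {y : ℝ} (hy : M ≤ y) : P {ω | V ω > y} = 0 := by
  have := hs.2.1
  rw [← compl_compl {ω | V ω > y}]
  change ∀ᵐ ω ∂P, ω ∈ {ω | V ω > y}ᶜ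
  filter_upwards [this] with ω hω
  simpa using hω.2.trans hy

lemma Pip_zero (hs : SuppIoo P V m M) {y : ℝ} (hy : M ≤ y) : Pip P V y = 0 := by
  simp [Pip, gt_null hs hy]

lemma Phip_zero (hs : SuppIoo P V m M) {y : ℝ} (hy : M ≤ y) : Phip P V y = 0 := by
  unfold Phip
  exact setIntegral_measure_zero _ (gt_null hs hy)

lemma Phip_gt (hVm : Measurable V) (hV : Integrable V P) (hs : SuppIoo P V m M) {y : ℝ}
    (hy : y < M) : y * Pip P V y < Phip P V y := by
  have h0 : 0 ≤ᵐ[P.restrict {ω | V ω > y}] fun ω => V ω - y := by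
    filter_upwards [ae_restrict_mem (gt_meas hVm y)] with ω hω
    have : V ω > y := hω
    simp; linarith
  have h1 := integral_nonneg_of_ae h0
  rcases h1.lt_or_eq with h | h
  · rw [Phip_sub hV] at h; linarith
  · exfalso
    have hi : Integrable (fun ω => V ω - y) (P.restrict {ω | V ω > y}) :=
      (hV.sub (integrable_const _)).integrableOn
    rw [eq_comm, integral_eq_zero_iff_of_nonneg_ae h0 hi] at h
    have h2 : ∀ᵐ ω ∂(P.restrict {ω | V ω > y}), False := by
      filter_upwards [h, ae_restrict_mem (gt_meas hVm y)] with ω h1 hω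
      have : V ω > y := hω
      simp at h1; linarith
    rw [ae_iff] at h2
    simp at h2
    exact (hs.2.2.1 y hy).ne' h2

lemma Phip_le (hVm : Measurable V) (hV : Integrable V P) (hs : SuppIoo P V m M) (y : ℝ) :
    Phip P V y ≤ M * Pip P V y := by
  have : ∫ ω in {ω | V ω > y}, (V ω - M) ∂P ≤ 0 := by
    apply integral_nonpos_of_ae
    filter_upwards [ae_restrict_of_ae hs.2.1] with ω hω
    simpa using hω.2
  rw [Phip_sub hV] at this; linarith

lemma Phip_ge (hVm : Measurable V) (hV : Integrable V P) (hs : SuppIoo P V m M) (y : ℝ) :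
    m * Pip P V y ≤ Phip P V y := by
  have : 0 ≤ ∫ ω in {ω | V ω > y}, (V ω - m) ∂P := by
    apply integral_nonneg_of_ae
    filter_upwards [ae_restrict_of_ae hs.2.1] with ω hω
    simpa using hω.1
  rw [Phip_sub hV] at this; linarith

/-- For `a ≤ b ≤ c`: `Φ(a) - cΠ(a) ≤ Φ(b) - cΠ(b)`. -/
lemma Phip_cmp (hVm : Measurable V) (hV : Integrable V P) {a b c : ℝ} (hab : a ≤ b) (hbc : b ≤ c) :
    Phip P V a - c * Pip P V a ≤ Phip P V b - c * Pip P V b := by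
  rw [← Phip_sub hV, ← Phip_sub hV, ← integral_indicator (gt_meas hVm a),
    ← integral_indicator (gt_meas hVm b)]
  have hi : Integrable (fun ω => V ω - c) P := hV.sub (integrable_const _)
  refine integral_mono (hi.indicator (gt_meas hVm a)) (hi.indicator (gt_meas hVm b)) fun ω => ?_
  simp only [Set.indicator, Set.mem_setOf_eq]
  split_ifs <;> linarith

lemma Phip_EV (hVm : Measurable V) (hV : Integrable V P) (y : ℝ) :
    (∫ ω, V ω ∂P) * Pip P V y ≤ Phip P V y := by
  set e := ∫ ω, V ω ∂P with he
  rcases le_total e y with h | h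
  · have : 0 ≤ ∫ ω in {ω | V ω > y}, (V ω - e) ∂P := by
      apply setIntegral_nonneg (gt_meas hVm y)
      intro ω (hω : V ω > y); linarith
    rw [Phip_sub hV] at this; linarith
  · have h1 : ∫ ω in {ω | V ω ≤ y}, (V ω - e) ∂P ≤ 0 := by
      apply setIntegral_nonpos (hVm measurableSet_Iic)
      intro ω (hω : V ω ≤ y); linarith
    have hi : Integrable (fun ω => V ω - e) P := hV.sub (integrable_const _)
    have h2 := integral_add_compl (gt_meas hVm y) hi
    rw [← compl_eq, Phip_sub hV, integral_sub hV (integrable_const _)] at h2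
    simp only [integral_const, probReal_univ, one_smul] at h2
    rw [← he] at h2
    linarith

lemma EV_gt (hVm : Measurable V) (hV : Integrable V P) (hs : SuppIoo P V m M) :
    m < ∫ ω, V ω ∂P := by
  have h1 := Phip_gt hVm hV hs hs.1
  have h2 : 0 ≤ ∫ ω in {ω | V ω ≤ m}, (V ω - m) ∂P := by
    apply integral_nonneg_of_ae
    filter_upwards [ae_restrict_of_ae hs.2.1] with ω hω
    simpa using hω.1
  rw [integral_sub hV.integrableOn (integrable_const _)] at h2
  have h3 : Phim P V m - m * Pim P V m ≥ 0 := by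
    simpa [Phim, Pim, Measure.real, mul_comm] using h2
  rw [Phim_eq hVm hV, Pim_eq hVm] at h3
  nlinarith

lemma EV_lt (hVm : Measurable V) (hV : Integrable V P) (hs : SuppIoo P V m M) :
    (∫ ω, V ω ∂P) < M := by
  obtain ⟨y, hy1, hy2⟩ := exists_between hs.1
  have h1 := Pim_pos hs hy1
  have h2 : ∫ ω in {ω | V ω ≤ y}, (V ω - y) ∂P ≤ 0 := by
    apply setIntegral_nonpos (hVm measurableSet_Iic)
    intro ω (hω : V ω ≤ y); linarith
  rw [integral_sub hV.integrableOn (integrable_const _)] at h2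
  have h3 : Phim P V y - y * Pim P V y ≤ 0 := by
    simpa [Phim, Pim, Measure.real, mul_comm] using h2
  have h4 := Phip_le hVm hV hs y
  have h5 := Phim_eq hVm hV y (P := P)
  have h6 := Pim_eq hVm y (P := P)
  have h7 : Pip P V y = 1 - Pim P V y := by linarith
  rw [h7] at h4
  nlinarith

/-- `Ψ⁺` extended by its natural value `M` on `[M,∞)`. -/
noncomputable def Psit (P : Measure Ω) (V : Ω → ℝ) (M y : ℝ) : ℝ :=
  if y < M then Psip P V y else M

lemma Psip_eq (hs : SuppIoo P V m M) (y : ℝ) :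
    Psip P V y = if y < M then Psit P V M y else 0 := by
  unfold Psit
  split_ifs with h
  · rfl
  · simp [Psip, Pip_zero hs (not_lt.1 h)]

lemma Phip_eq (hs : SuppIoo P V m M) (y : ℝ) : Phip P V y = Psit P V M y * Pip P V y := by
  unfold Psit
  split_ifs with h
  · unfold Psip; rw [div_mul_cancel₀ _ (Pip_pos hs h).ne']
  · rw [Phip_zero hs (not_lt.1 h), Pip_zero hs (not_lt.1 h), mul_zero]

lemma Psit_le (hVm : Measurable V) (hV : Integrable V P) (hs : SuppIoo P V m M) (y : ℝ) :
    Psit P V M y ≤ M := by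
  unfold Psit
  split_ifs with h
  · exact (div_le_iff₀ (Pip_pos hs h)).2 (Phip_le hVm hV hs y)
  · exact le_rfl

lemma Psit_ge (hVm : Measurable V) (hV : Integrable V P) (hs : SuppIoo P V m M) (y : ℝ) :
    (∫ ω, V ω ∂P) ≤ Psit P V M y := by
  unfold Psit
  split_ifs with h
  · exact (le_div_iff₀ (Pip_pos hs h)).2 (Phip_EV hVm hV y)
  · exact (EV_lt hVm hV hs).le

lemma Psit_gt (hVm : Measurable V) (hV : Integrable V P) (hs : SuppIoo P V m M) {y : ℝ}
    (h : y < M) : y < Psit P V M y := by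
  unfold Psit
  rw [if_pos h]
  exact (lt_div_iff₀ (Pip_pos hs h)).2 (Phip_gt hVm hV hs h)

lemma Psit_mono (hVm : Measurable V) (hV : Integrable V P) (hs : SuppIoo P V m M) :
    Monotone (Psit P V M) := by
  intro a b hab
  by_cases hb : b < M
  · have ha := hab.trans_lt hb
    have h1 := (Psit_gt hVm hV hs hb).le
    have h2 := Phip_cmp hVm hV hab h1
    rw [Phip_eq hs b, sub_self] at h2
    conv_lhs => rw [Psit, if_pos ha, Psip]
    rw [div_le_iff₀ (Pip_pos hs ha)]
    linarith
  · conv_rhs => rw [Psit, if_neg hb]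
    exact Psit_le hVm hV hs a

lemma Psit_abs (hVm : Measurable V) (hV : Integrable V P) (hs : SuppIoo P V m M) (y : ℝ) :
    |Psit P V M y| ≤ |m| + |M| := by
  have h1 := Psit_le hVm hV hs y
  have h2 := Psit_ge hVm hV hs y
  have h3 := EV_gt hVm hV hs
  have := neg_abs_le m
  have := le_abs_self M
  have := abs_nonneg m
  have := abs_nonneg M
  rw [abs_le]; constructor <;> linarith

lemma Phip_tendsto (hVm : Measurable V) {f : Ω → ℝ} (hf : Integrable f P) {a : ℕ → ℝ} {b : ℝ}
    (hab : ∀ n, b ≤ a n) (ht : Tendsto a atTop (nhds b)) :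
    Tendsto (fun n => ∫ ω in {ω | V ω > a n}, f ω ∂P) atTop
      (nhds (∫ ω in {ω | V ω > b}, f ω ∂P)) := by
  have e : ∀ y, ∫ ω in {ω | V ω > y}, f ω ∂P = ∫ ω, {ω | V ω > y}.indicator f ω ∂P :=
    fun y => (integral_indicator (gt_meas hVm y)).symm
  simp_rw [e]
  refine tendsto_integral_of_dominated_convergence (fun ω => ‖f ω‖) ?_ hf.norm ?_ ?_
  · exact fun n => (hf.indicator (gt_meas hVm _)).aestronglyMeasurable
  · exact fun n => Filter.Eventually.of_forall fun ω => norm_indicator_le_norm_self _ _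
  · refine Filter.Eventually.of_forall fun ω => ?_
    by_cases h : V ω > b
    · apply tendsto_const_nhds.congr'
      filter_upwards [ht.eventually_lt_const h] with n hn
      simp [Set.indicator, h, hn]
    · apply tendsto_const_nhds.congr
      intro n
      have : ¬ V ω > a n := fun h' => h (lt_of_le_of_lt (hab n) h')
      simp [Set.indicator, h, this]

lemma Psit_tendsto (hVm : Measurable V) (hV : Integrable V P) (hs : SuppIoo P V m M)
    {a : ℕ → ℝ} {b : ℝ} (hab : ∀ n, b ≤ a n) (ht : Tendsto a atTop (nhds b)) :
    Tendsto (fun n => Psit P V M (a n)) atTop (nhds (Psit P V M b)) := by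
  by_cases hb : b < M
  · have h1 := Phip_tendsto hVm hV hab ht
    have h2 := Phip_tendsto (P := P) hVm (integrable_const (1:ℝ)) hab ht
    have h3 : Tendsto (fun n => Pip P V (a n)) atTop (nhds (Pip P V b)) := by
      simpa [Pip, Measure.real] using h2
    have h4 := h1.div h3 (Pip_pos hs hb).ne'
    rw [Psit, if_pos hb]
    refine h4.congr' ?_
    filter_upwards [ht.eventually_lt_const hb] with n hn
    simp [Psit, hn, Psip, Phip]
  · apply tendsto_const_nhds.congr
    intro n
    simp [Psit, hb, not_lt.2 ((not_lt.1 hb).trans (hab n))]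

end Vsec
/-- The function `z ↦ (f * q)(z)` on `[0,∞)`, extended by `e` on `(-∞,0)`. -/
noncomputable def hop (σ e : ℝ) (f : ℝ → ℝ) (z : ℝ) : ℝ :=
  if 0 ≤ z then ∫ w, f (z + w) ∂(gam σ) else e

lemma conv_measurable (σ : ℝ) {f : ℝ → ℝ} (hf : Measurable f) :
    Measurable fun z => ∫ w, f (z + w) ∂(gam σ) := by
  have : StronglyMeasurable (Function.uncurry fun (z w : ℝ) => f (z + w)) :=
    (hf.comp (by fun_prop : Measurable fun p : ℝ × ℝ => p.1 + p.2)).stronglyMeasurable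
  exact this.integral_prod_right.measurable

lemma hop_meas (σ e : ℝ) {f : ℝ → ℝ} (hf : Measurable f) : Measurable (hop σ e f) :=
  Measurable.ite measurableSet_Ici (conv_measurable σ hf) measurable_const

lemma conv_integrable (σ : ℝ) {f : ℝ → ℝ} (hf : Measurable f) {C : ℝ} (hC : ∀ x, |f x| ≤ C)
    (z : ℝ) : Integrable (fun w => f (z + w)) (gam σ) :=
  bdd_integrable _ (by fun_prop) fun _ => hC _

lemma conv_le (σ : ℝ) {f g : ℝ → ℝ} (hf : Measurable f) {C : ℝ} (hC : ∀ x, |f x| ≤ C)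
    (hg : Measurable g) {D : ℝ} (hD : ∀ x, |g x| ≤ D) (z : ℝ) (h : ∀ x, f x ≤ g x) :
    ∫ w, f (z + w) ∂(gam σ) ≤ ∫ w, g (z + w) ∂(gam σ) :=
  integral_mono (conv_integrable σ hf hC z) (conv_integrable σ hg hD z) fun _ => h _

lemma conv_abs (σ : ℝ) {f : ℝ → ℝ} {C : ℝ} (hC : ∀ x, |f x| ≤ C) (z : ℝ) :
    |∫ w, f (z + w) ∂(gam σ)| ≤ C := by
  have := norm_integral_le_of_norm_le_const (μ := gam σ) (f := fun w => f (z + w)) (C := C)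
    (Filter.Eventually.of_forall fun w => hC _)
  simpa using this

lemma hop_abs (σ : ℝ) {e : ℝ} {f : ℝ → ℝ} {C : ℝ} (hC : ∀ x, |f x| ≤ C) (he : |e| ≤ C) (z : ℝ) :
    |hop σ e f z| ≤ C := by
  unfold hop
  split_ifs
  · exact conv_abs σ hC z
  · exact he

lemma Cp_rhs {σ : ℝ} (hσ : 0 < σ) {N : ℕ} (hN : 1 ≤ N) (x : ℝ) {e : ℝ} {f : ℝ → ℝ}
    (hf : Measurable f) {C : ℝ} (hC : ∀ x, |f x| ≤ C) (he : |e| ≤ C) :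
    (∫ z in Set.Ioi (0:ℝ),
      ((1 / (N:ℝ)) * gq σ (x - z) + (((N:ℝ) - 1) / (N:ℝ)) * gqbar σ x z) *
        ∫ y, f y * gq σ (z - y)) +
    e * ∫ z in Set.Iio (0:ℝ),
        ((1 / (N:ℝ)) * gq σ (x - z) + (((N:ℝ) - 1) / (N:ℝ)) * gqbar σ x z)
    = Aop σ N (hop σ e f) x := by
  obtain ⟨hi, he'⟩ := K_eq hσ hN x (hop_meas σ e hf) (hop_abs σ hC he)
  rw [← he', ← integral_add_compl (measurableSet_Ioi (a := (0:ℝ))) hi, Set.compl_Ioi,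
    integral_Iic_eq_integral_Iio, ← integral_const_mul]
  congr 1
  · refine setIntegral_congr_fun measurableSet_Ioi fun z hz => ?_
    have : 0 ≤ z := le_of_lt hz
    simp only [conv_eq hσ, hop, if_pos this]
  · refine setIntegral_congr_fun measurableSet_Iio fun z hz => ?_
    have : ¬ 0 ≤ z := not_le.2 hz
    simp only [hop, if_neg this]
    ring

lemma conv_any_meas {σ : ℝ} (hσ : 0 < σ) (f : ℝ → ℝ) :
    Measurable fun x => ∫ z, f z * gq σ (x - z) := by
  by_cases hf : AEStronglyMeasurable f volume
  · have h1 : (fun x => ∫ z, f z * gq σ (x - z)) = fun x => ∫ z, hf.mk f z * gq σ (x - z) := by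
      ext x
      apply integral_congr_ae
      filter_upwards [hf.ae_eq_mk] with z hz
      rw [hz]
    rw [h1]
    have : StronglyMeasurable (Function.uncurry fun (x z : ℝ) => hf.mk f z * gq σ (x - z)) :=
      ((hf.stronglyMeasurable_mk.measurable.comp measurable_snd).mul
        ((gq_cont σ).measurable.comp (measurable_fst.sub measurable_snd))).stronglyMeasurable
    exact this.integral_prod_right.measurable
  · have h1 : (fun x => ∫ z, f z * gq σ (x - z)) = fun x => 0 := by
      ext x
      apply integral_non_aestronglyMeasurable
      intro h
      apply hf
      have h2 : AEStronglyMeasurable (fun z => (gq σ (x - z))⁻¹) volume :=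
        ((gq_cont σ).measurable.comp (measurable_const.sub measurable_id)).inv.aestronglyMeasurable
      refine (h.mul h2).congr (Filter.Eventually.of_forall fun z => ?_)
      simp only [Pi.mul_apply]
      field_simp [(gq_pos hσ (x - z)).ne']
    rw [h1]; exact measurable_const

lemma ratio_abs {σ : ℝ} (hσ : 0 < σ) {f p : ℝ → ℝ} {C : ℝ} (hC0 : 0 ≤ C)
    (h : ∀ z, |f z| ≤ C * p z) (x : ℝ) :
    |(∫ z, f z * gq σ (x - z)) / (∫ z, p z * gq σ (x - z))| ≤ C := by
  by_cases hi : Integrable (fun z => p z * gq σ (x - z))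
  · have h1 : |∫ z, f z * gq σ (x - z)| ≤ ∫ z, C * (p z * gq σ (x - z)) := by
      rw [← Real.norm_eq_abs]
      refine norm_integral_le_of_norm_le (hi.const_mul C) (Filter.Eventually.of_forall fun z => ?_)
      rw [norm_mul, Real.norm_eq_abs, Real.norm_eq_abs, abs_of_pos (gq_pos hσ _), ← mul_assoc]
      exact mul_le_mul_of_nonneg_right (h z) (gq_pos hσ _).le
    rw [integral_const_mul] at h1
    rw [abs_div]
    apply div_le_of_le_mul₀ (abs_nonneg _) hC0
    exact h1.trans (mul_le_mul_of_nonneg_left (le_abs_self _) hC0)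
  · rw [integral_undef hi]; simpa using hC0

lemma den_pos {σ : ℝ} (hσ : 0 < σ) {p : ℝ → ℝ} (hp : Measurable p) (h0 : ∀ z, 0 ≤ p z)
    (h1 : ∀ z, p z ≤ 1) (hne : ¬ ∀ᵐ z, p z = 0) (x : ℝ) :
    0 < ∫ z, p z * gq σ (x - z) := by
  have hnn : ∀ z, 0 ≤ p z * gq σ (x - z) := fun z => mul_nonneg (h0 z) (gq_pos hσ _).le
  have hi : Integrable (fun z => p z * gq σ (x - z)) :=
    (integrable_gq hσ x).bdd_mul (c := 1) hp.aestronglyMeasurable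
      (Filter.Eventually.of_forall fun z => by
        rw [Real.norm_eq_abs, abs_of_nonneg (h0 z)]; exact h1 z)
  refine lt_of_le_of_ne (integral_nonneg hnn) fun h => hne ?_
  rw [eq_comm, integral_eq_zero_iff_of_nonneg hnn hi] at h
  filter_upwards [h] with z hz
  exact (mul_eq_zero.1 hz).resolve_right (gq_pos hσ _).ne'

lemma int_sub4 {α : Type*} [MeasurableSpace α] {μ : Measure α} {f g h k : α → ℝ}
    (hf : Integrable f μ) (hg : Integrable g μ) (hh : Integrable h μ) (hk : Integrable k μ) :
    ∫ s, (f s - g s - (h s - k s)) ∂μ =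
      (∫ s, f s ∂μ) - (∫ s, g s ∂μ) - ((∫ s, h s ∂μ) - ∫ s, k s ∂μ) := by
  rw [← integral_sub hf hg, ← integral_sub hh hk]
  exact integral_sub (hf.sub hg) (hh.sub hk)

lemma cheb {α : Type*} [MeasurableSpace α] (μ : Measure α) [IsProbabilityMeasure μ]
    {a p : α → ℝ} (ha : Measurable a) (hp : Measurable p) {C D : ℝ} (hC : ∀ x, |a x| ≤ C)
    (hD : ∀ x, |p x| ≤ D) (h : ∀ s t, (a s - a t) * (p s - p t) ≤ 0) :
    ∫ s, a s * p s ∂μ ≤ (∫ s, a s ∂μ) * ∫ s, p s ∂μ := by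
  have ia := bdd_integrable μ ha hC
  have ip := bdd_integrable μ hp hD
  have iap : Integrable (fun s => a s * p s) μ := by
    refine bdd_integrable μ (ha.mul hp) (C := C * D) fun x => ?_
    rw [abs_mul]
    exact mul_le_mul (hC x) (hD x) (abs_nonneg _) ((abs_nonneg _).trans (hC x))
  set I := ∫ s, a s * p s ∂μ with hI
  set A := ∫ s, a s ∂μ with hA
  set B := ∫ s, p s ∂μ with hB
  have h1 : ∀ t, I - p t * A - a t * B + a t * p t ≤ 0 := by
    intro t
    have h2 : ∫ s, (a s - a t) * (p s - p t) ∂μ ≤ 0 := integral_nonpos fun s => h s t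
    have h3 : ∀ s, (a s - a t) * (p s - p t) =
        (a s * p s - p t * a s) - (a t * p s - a t * p t) := by intro s; ring
    simp_rw [h3] at h2
    rw [int_sub4 iap (ia.const_mul _) (ip.const_mul _) (integrable_const _),
      integral_const_mul, integral_const_mul, integral_const, probReal_univ, one_smul] at h2
    linarith
  have h4 : ∫ t, ((I - p t * A) - (a t * B - a t * p t)) ∂μ ≤ 0 :=
    integral_nonpos fun t => by have := h1 t; simp only [Pi.zero_apply]; linarith
  rw [int_sub4 (integrable_const _) (ip.mul_const _) (ia.mul_const _) iap,
    integral_mul_const, integral_mul_const, integral_const, probReal_univ, one_smul] at h4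
  rw [← hI, ← hA, ← hB] at h4
  linarith

lemma ae_lim_bot {F : ℝ → ℝ} {c L : ℝ} (h : ∀ᵐ x, F x = c) (hL : Tendsto F atBot (nhds L)) :
    L = c := by
  by_contra hne
  have h1 : ∀ᶠ x in atBot, F x ≠ c := hL.eventually_ne hne
  obtain ⟨a, ha⟩ := Filter.eventually_atBot.1 h1
  have : volume (Set.Iic a) = 0 := measure_mono_null (fun x hx => ha x hx) h
  simp at this

lemma ae_lim_top {F : ℝ → ℝ} {c L : ℝ} (h : ∀ᵐ x, F x = c) (hL : Tendsto F atTop (nhds L)) :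
    L = c := by
  by_contra hne
  have h1 : ∀ᶠ x in atTop, F x ≠ c := hL.eventually_ne hne
  obtain ⟨a, ha⟩ := Filter.eventually_atTop.1 h1
  have : volume (Set.Ici a) = 0 := measure_mono_null (fun x hx => ha x hx) h
  simp at this

section Esec
variable {Ω : Type*} [MeasurableSpace Ω] {P : Measure Ω} [IsProbabilityMeasure P]
  {V : Ω → ℝ} {m M : ℝ}

lemma Phip_abs (hVm : Measurable V) (hV : Integrable V P) (hs : SuppIoo P V m M) (y : ℝ) :
    |Phip P V y| ≤ (|m| + |M|) * Pip P V y := by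
  rw [Phip_eq hs, abs_mul, abs_of_nonneg (Pip_nonneg y)]
  exact mul_le_mul_of_nonneg_right (Psit_abs hVm hV hs y) (Pip_nonneg y)

lemma Phim_abs (hVm : Measurable V) (hV : Integrable V P) (hs : SuppIoo P V m M) (y : ℝ) :
    |Phim P V y| ≤ (|m| + |M|) * Pim P V y := by
  have h : ∀ᵐ ω ∂(P.restrict {ω | V ω ≤ y}), ‖V ω‖ ≤ |m| + |M| := by
    filter_upwards [ae_restrict_of_ae hs.2.1] with ω hω
    have := neg_abs_le m
    have := le_abs_self M
    have := abs_nonneg m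
    have := abs_nonneg M
    rw [Real.norm_eq_abs, abs_le]; constructor <;> linarith [hω.1, hω.2]
  exact norm_setIntegral_le_of_norm_le_const_ae (measure_lt_top _ _) h

lemma phig_abs (hVm : Measurable V) (hV : Integrable V P) (hs : SuppIoo P V m M)
    {σ : ℝ} (hσ : 0 < σ) (F : ℝ → ℝ) (x : ℝ) : |phig P V σ F x| ≤ |m| + |M| := by
  unfold phig
  split_ifs
  · exact ratio_abs hσ (by positivity) (fun z => Phip_abs hVm hV hs (F z)) x
  · exact ratio_abs hσ (by positivity) (fun z => Phim_abs hVm hV hs (F z)) x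

lemma phig_meas {σ : ℝ} (hσ : 0 < σ) (F : ℝ → ℝ) : Measurable (phig P V σ F) :=
  Measurable.ite measurableSet_Ici
    ((conv_any_meas hσ fun z => Phip P V (F z)).div (conv_any_meas hσ fun z => Pip P V (F z)))
    ((conv_any_meas hσ fun z => Phim P V (F z)).div (conv_any_meas hσ fun z => Pim P V (F z)))

lemma E_eq (hVm : Measurable V) (hV : Integrable V P) (hs : SuppIoo P V m M)
    {σ : ℝ} (hσ : 0 < σ) {N : ℕ} (hN : 1 ≤ N) {F : ℝ → ℝ} (hE : SolvesE P V σ N F) :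
    F = Aop σ N (phig P V σ F) := by
  ext x
  rw [hE x]
  exact (K_eq hσ hN x (phig_meas hσ F) (phig_abs hVm hV hs hσ F)).2

lemma E_not_M (hVm : Measurable V) (hV : Integrable V P) (hs : SuppIoo P V m M)
    {σ : ℝ} (hσ : 0 < σ) {N : ℕ} (hN : 1 ≤ N) {F : ℝ → ℝ} (hE : SolvesE P V σ N F) :
    ¬ ∀ᵐ x, F x = M := by
  intro h
  have h1 : Tendsto (phig P V σ F) atBot (nhds (∫ ω, V ω ∂P)) := by
    apply tendsto_const_nhds.congr'
    filter_upwards [eventually_lt_atBot (0:ℝ)] with x hx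
    rw [phig, if_neg (not_le.2 hx), phim]
    have e1 : ∫ z, Phim P V (F z) * gq σ (x - z) = ∫ z, Phim P V M * gq σ (x - z) :=
      integral_congr_ae (by filter_upwards [h] with z hz; rw [hz])
    have e2 : ∫ z, Pim P V (F z) * gq σ (x - z) = ∫ z, Pim P V M * gq σ (x - z) :=
      integral_congr_ae (by filter_upwards [h] with z hz; rw [hz])
    rw [e1, e2, integral_const_mul, integral_const_mul, int_gq hσ, Phim_eq hVm hV, Pim_eq hVm,
      Pip_zero hs le_rfl, Phip_zero hs le_rfl]
    simp
  have h2 := A_bot (σ := σ) hN (phig_meas hσ F) (phig_abs hVm hV hs hσ F) h1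
  rw [← E_eq hVm hV hs hσ hN hE] at h2
  exact (EV_lt hVm hV hs).ne (ae_lim_bot h h2)

lemma E_not_m (hVm : Measurable V) (hV : Integrable V P) (hs : SuppIoo P V m M)
    {σ : ℝ} (hσ : 0 < σ) {N : ℕ} (hN : 1 ≤ N) {F : ℝ → ℝ} (hE : SolvesE P V σ N F) :
    ¬ ∀ᵐ x, F x = m := by
  intro h
  have h1 : Tendsto (phig P V σ F) atTop (nhds (Psit P V M m)) := by
    apply tendsto_const_nhds.congr'
    filter_upwards [eventually_ge_atTop (0:ℝ)] with x hx
    rw [phig, if_pos hx, phip]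
    have e1 : ∫ z, Phip P V (F z) * gq σ (x - z) = ∫ z, Phip P V m * gq σ (x - z) :=
      integral_congr_ae (by filter_upwards [h] with z hz; rw [hz])
    have e2 : ∫ z, Pip P V (F z) * gq σ (x - z) = ∫ z, Pip P V m * gq σ (x - z) :=
      integral_congr_ae (by filter_upwards [h] with z hz; rw [hz])
    rw [e1, e2, integral_const_mul, integral_const_mul, int_gq hσ, Psit, if_pos hs.1]
    simp [Psip]
  have h2 := A_top (σ := σ) hN (phig_meas hσ F) (phig_abs hVm hV hs hσ F) h1
  rw [← E_eq hVm hV hs hσ hN hE] at h2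
  exact (Psit_gt hVm hV hs hs.1).ne' (ae_lim_top h h2)

/-- The corrected right-hand side of (C⁺). -/
noncomputable def TopR (P : Measure Ω) (V : Ω → ℝ) (M σ : ℝ) (N : ℕ) (R : ℝ → ℝ) : ℝ → ℝ :=
  Aop σ N (hop σ (∫ ω, V ω ∂P) fun y => Psit P V M (R y))

lemma EV_abs (hVm : Measurable V) (hV : Integrable V P) (hs : SuppIoo P V m M) :
    |∫ ω, V ω ∂P| ≤ |m| + |M| := by
  have h1 := EV_lt hVm hV hs
  have h3 := EV_gt hVm hV hs
  have := neg_abs_le m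
  have := le_abs_self M
  have := abs_nonneg m
  have := abs_nonneg M
  rw [abs_le]; constructor <;> linarith

lemma PR_meas (hVm : Measurable V) (hV : Integrable V P) (hs : SuppIoo P V m M) {R : ℝ → ℝ}
    (hR : Measurable R) : Measurable fun y => Psit P V M (R y) :=
  (Psit_mono hVm hV hs).measurable.comp hR

lemma E_le (hVm : Measurable V) (hV : Integrable V P) (hs : SuppIoo P V m M)
    {σ : ℝ} (hσ : 0 < σ) {N : ℕ} (hN : 1 ≤ N) {F : ℝ → ℝ} (hF : ∀ x, F x ∈ Set.Icc m M)
    (hE : SolvesE P V σ N F) : Measurable F ∧ ∀ x, F x ≤ TopR P V M σ N F x := by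
  have hFA := E_eq hVm hV hs hσ hN hE
  have hFm : Measurable F := by rw [hFA]; exact A_meas hN (phig_meas hσ F)
  refine ⟨hFm, fun x => ?_⟩
  have hpm := PR_meas hVm hV hs hFm
  conv_lhs => rw [hFA]
  refine A_mono hN x (phig_meas hσ F) (phig_abs hVm hV hs hσ F)
    (hop_meas σ _ hpm) (hop_abs σ (fun y => Psit_abs hVm hV hs (F y)) (EV_abs hVm hV hs)) ?_
  intro z
  have hPm : Measurable fun y => Pip P V (F y) := (Pip_anti (P := P) (V := V)).measurable.comp hFm
  unfold phig hop
  split_ifs with hz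
  · unfold phip
    have hd : 0 < ∫ y, Pip P V (F y) * gq σ (z - y) := by
      refine den_pos hσ hPm (fun y => Pip_nonneg _) (fun y => Pip_le_one _) (fun h => ?_) z
      apply E_not_M hVm hV hs hσ hN hE
      filter_upwards [h] with y hy
      by_contra hne
      exact (Pip_pos hs (lt_of_le_of_ne (hF y).2 hne)).ne' hy
    rw [div_le_iff₀ hd, conv_eq hσ, conv_eq hσ (fun y => Pip P V (F y))]
    simp_rw [Phip_eq hs]
    refine cheb (gam σ) (a := fun w => Psit P V M (F (z + w))) (p := fun w => Pip P V (F (z + w)))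
      (hpm.comp (measurable_const_add z)) (hPm.comp (measurable_const_add z))
      (C := |m| + |M|) (D := 1) (fun w => Psit_abs hVm hV hs _)
      (fun w => by rw [abs_of_nonneg (Pip_nonneg _)]; exact Pip_le_one _) ?_
    intro s t
    rcases le_total (F (z + s)) (F (z + t)) with h | h
    · exact mul_nonpos_of_nonpos_of_nonneg (sub_nonpos.2 (Psit_mono hVm hV hs h))
        (sub_nonneg.2 (Pip_anti h))
    · exact mul_nonpos_of_nonneg_of_nonpos (sub_nonneg.2 (Psit_mono hVm hV hs h))
        (sub_nonpos.2 (Pip_anti h))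
  · unfold phim
    have hPm' : Measurable fun y => Pim P V (F y) := by
      simp_rw [Pim_eq hVm]; exact measurable_const.sub hPm
    have hP1 : ∀ y, Pim P V y ≤ 1 := fun y => by
      rw [Pim_eq hVm]; linarith [Pip_nonneg (P := P) (V := V) y]
    have hP0 : ∀ y, 0 ≤ Pim P V y := fun y => ENNReal.toReal_nonneg
    have hd : 0 < ∫ y, Pim P V (F y) * gq σ (z - y) := by
      refine den_pos hσ hPm' (fun y => hP0 _) (fun y => hP1 _) (fun h => ?_) z
      apply E_not_m hVm hV hs hσ hN hE
      filter_upwards [h] with y hy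
      by_contra hne
      exact (Pim_pos hs (lt_of_le_of_ne (hF y).1 (Ne.symm hne))).ne' hy
    rw [div_le_iff₀ hd, conv_eq hσ, conv_eq hσ (fun y => Pim P V (F y)), ← integral_const_mul]
    have hPhm : Measurable fun y => Phim P V (F y) := by
      simp_rw [Phim_eq hVm hV, Phip_eq hs]
      exact measurable_const.sub (hpm.mul hPm)
    apply integral_mono
    · refine conv_integrable σ hPhm (C := |m| + |M|) (fun y => ?_) z
      exact (Phim_abs hVm hV hs _).trans (mul_le_of_le_one_right (by positivity) (hP1 _))
    · refine (conv_integrable σ hPm' (C := 1) (fun y => ?_) z).const_mul _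
      rw [abs_of_nonneg (hP0 _)]; exact hP1 _
    · intro w
      have := Phip_EV (P := P) hVm hV (F (z + w))
      simp only [Phim_eq hVm hV, Pim_eq hVm]
      linarith

lemma hop_ge (hVm : Measurable V) (hV : Integrable V P) (hs : SuppIoo P V m M) (σ : ℝ) {R : ℝ → ℝ}
    (hR : Measurable R) (z : ℝ) :
    (∫ ω, V ω ∂P) ≤ hop σ (∫ ω, V ω ∂P) (fun y => Psit P V M (R y)) z := by
  unfold hop
  split_ifs
  · have := conv_le σ (f := fun _ => ∫ ω, V ω ∂P) measurable_const (fun _ => le_rfl)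
      (PR_meas hVm hV hs hR) (fun y => Psit_abs hVm hV hs (R y)) z (fun y => Psit_ge hVm hV hs (R y))
    simpa using this
  · exact le_rfl

lemma hop_le (hVm : Measurable V) (hV : Integrable V P) (hs : SuppIoo P V m M) (σ : ℝ) {R : ℝ → ℝ}
    (hR : Measurable R) (z : ℝ) :
    hop σ (∫ ω, V ω ∂P) (fun y => Psit P V M (R y)) z ≤ M := by
  unfold hop
  split_ifs
  · have := conv_le σ (g := fun _ => M) (PR_meas hVm hV hs hR) (fun y => Psit_abs hVm hV hs (R y))
      measurable_const (fun _ => le_rfl) z (fun y => Psit_le hVm hV hs (R y))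
    simpa using this
  · exact (EV_lt hVm hV hs).le

lemma TopR_lt (hVm : Measurable V) (hV : Integrable V P) (hs : SuppIoo P V m M)
    {σ : ℝ} (hσ : 0 < σ) {N : ℕ} (hN : 1 ≤ N) {R : ℝ → ℝ} (hR : Measurable R) (x : ℝ) :
    TopR P V M σ N R x < M := by
  refine A_lt hσ hN (hop_meas σ _ (PR_meas hVm hV hs hR))
    (hop_abs σ (fun y => Psit_abs hVm hV hs (R y)) (EV_abs hVm hV hs))
    (hop_le hVm hV hs σ hR) (fun z hz => ?_) x
  rw [hop, if_neg (not_le.2 hz)]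
  exact EV_lt hVm hV hs

lemma TopR_ge (hVm : Measurable V) (hV : Integrable V P) (hs : SuppIoo P V m M)
    {σ : ℝ} {N : ℕ} (hN : 1 ≤ N) {R : ℝ → ℝ} (hR : Measurable R) (x : ℝ) :
    m ≤ TopR P V M σ N R x := by
  have := A_mono (σ := σ) hN x (h := fun _ => ∫ ω, V ω ∂P) measurable_const (fun _ => le_rfl)
    (hop_meas σ _ (PR_meas hVm hV hs hR))
    (hop_abs σ (fun y => Psit_abs hVm hV hs (R y)) (EV_abs hVm hV hs)) (hop_ge hVm hV hs σ hR)
  rw [A_const hN] at this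
  exact (EV_gt hVm hV hs).le.trans this

lemma TopR_monotone (hVm : Measurable V) (hV : Integrable V P) (hs : SuppIoo P V m M)
    {σ : ℝ} {N : ℕ} (hN : 1 ≤ N) {R : ℝ → ℝ} (hR : Monotone R) :
    Monotone (TopR P V M σ N R) := by
  have hm := PR_meas hVm hV hs hR.measurable
  have hb := fun y => Psit_abs hVm hV hs (R y)
  refine A_monotone hN ?_ (hop_abs σ hb (EV_abs hVm hV hs))
  intro a b hab
  by_cases ha : 0 ≤ a
  · simp only [hop, if_pos ha, if_pos (ha.trans hab)]
    exact integral_mono (conv_integrable σ hm hb a) (conv_integrable σ hm hb b)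
      fun w => Psit_mono hVm hV hs (hR (by linarith))
  · have : hop σ (∫ ω, V ω ∂P) (fun y => Psit P V M (R y)) a = ∫ ω, V ω ∂P := by
      rw [hop, if_neg ha]
    rw [this]
    exact hop_ge hVm hV hs σ hR.measurable b

lemma TopR_le (hVm : Measurable V) (hV : Integrable V P) (hs : SuppIoo P V m M)
    {σ : ℝ} {N : ℕ} (hN : 1 ≤ N) {R S : ℝ → ℝ} (hR : Measurable R)
    (hS : Measurable S) (hRS : ∀ x, R x ≤ S x) (x : ℝ) :
    TopR P V M σ N R x ≤ TopR P V M σ N S x := by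
  refine A_mono hN x (hop_meas σ _ (PR_meas hVm hV hs hR))
    (hop_abs σ (fun y => Psit_abs hVm hV hs (R y)) (EV_abs hVm hV hs))
    (hop_meas σ _ (PR_meas hVm hV hs hS))
    (hop_abs σ (fun y => Psit_abs hVm hV hs (S y)) (EV_abs hVm hV hs)) fun z => ?_
  unfold hop
  split_ifs
  · exact conv_le σ (PR_meas hVm hV hs hR) (fun y => Psit_abs hVm hV hs (R y))
      (PR_meas hVm hV hs hS) (fun y => Psit_abs hVm hV hs (S y)) z
      fun y => Psit_mono hVm hV hs (hRS y)
  · exact le_rfl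

lemma TopR_tendsto (hVm : Measurable V) (hV : Integrable V P) (hs : SuppIoo P V m M)
    {σ : ℝ} {N : ℕ} (hN : 1 ≤ N) {R : ℕ → ℝ → ℝ} {S : ℝ → ℝ} (hR : ∀ n, Measurable (R n))
    (hRS : ∀ n x, S x ≤ R n x)
    (ht : ∀ x, Tendsto (fun n => R n x) atTop (nhds (S x))) (x : ℝ) :
    Tendsto (fun n => TopR P V M σ N (R n) x) atTop (nhds (TopR P V M σ N S x)) := by
  have := nu_prob hN
  have hh : ∀ z, Tendsto (fun n => hop σ (∫ ω, V ω ∂P) (fun y => Psit P V M (R n y)) z) atTop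
      (nhds (hop σ (∫ ω, V ω ∂P) (fun y => Psit P V M (S y)) z)) := by
    intro z
    unfold hop
    split_ifs
    · refine tendsto_integral_of_dominated_convergence (fun _ => |m| + |M|) ?_
        (integrable_const _) ?_ ?_
      · exact fun n => (conv_integrable σ (PR_meas hVm hV hs (hR n))
          (fun y => Psit_abs hVm hV hs (R n y)) z).aestronglyMeasurable
      · exact fun n => Filter.Eventually.of_forall fun w => Psit_abs hVm hV hs _
      · exact Filter.Eventually.of_forall fun w =>
          Psit_tendsto hVm hV hs (fun n => hRS n _) (ht _)
    · exact tendsto_const_nhds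
  refine tendsto_integral_of_dominated_convergence (fun _ => |m| + |M|) ?_
    (integrable_const _) ?_ ?_
  · exact fun n => (A_integrable hN x (hop_meas σ _ (PR_meas hVm hV hs (hR n)))
      (hop_abs σ (fun y => Psit_abs hVm hV hs (R n y)) (EV_abs hVm hV hs))).aestronglyMeasurable
  · exact fun n => Filter.Eventually.of_forall fun p =>
      hop_abs σ (fun y => Psit_abs hVm hV hs (R n y)) (EV_abs hVm hV hs) _
  · exact Filter.Eventually.of_forall fun p => hh _

lemma Cp_Psip_eq (hVm : Measurable V) (hV : Integrable V P) (hs : SuppIoo P V m M)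
    {σ : ℝ} (hσ : 0 < σ) {N : ℕ} (hN : 1 ≤ N) {r : ℝ → ℝ} (hr : Monotone r)
    (hr2 : ∀ x, r x ∈ Set.Icc m M) (hS : SolvesCp P V σ N r) :
    ∀ y, Psip P V (r y) = Psit P V M (r y) := by
  intro y
  rw [Psip_eq hs]
  split_ifs with h
  · rfl
  · have hM0 : 0 = M := by
      have hm : Measurable fun y => Psip P V (r y) := by
        simp_rw [Psip_eq hs]
        exact Measurable.ite (measurableSet_lt hr.measurable measurable_const)
          (PR_meas hVm hV hs hr.measurable) measurable_const
      have hb : ∀ y, |Psip P V (r y)| ≤ |m| + |M| := by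
        intro y
        rw [Psip_eq hs]
        split_ifs
        · exact Psit_abs hVm hV hs _
        · simp only [abs_zero]; positivity
      have he : r = Aop σ N (hop σ (∫ ω, V ω ∂P) fun y => Psip P V (r y)) := by
        ext x
        rw [← Cp_rhs hσ hN x hm hb (EV_abs hVm hV hs)]
        exact hS x
      have hge : ∀ x, y ≤ x → r x = M := fun x hx =>
        le_antisymm (hr2 x).2 ((not_lt.1 h).trans (hr hx))
      have hlim : Tendsto (fun z => ∫ w, Psip P V (r (z + w)) ∂(gam σ)) atTop (nhds 0) := by
        have e : (0:ℝ) = ∫ w, (0:ℝ) ∂(gam σ) := by simp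
        rw [e]
        refine tendsto_integral_filter_of_dominated_convergence (fun _ => |m| + |M|) ?_ ?_
          (integrable_const _) ?_
        · exact Filter.Eventually.of_forall fun z =>
            (conv_integrable σ hm hb z).aestronglyMeasurable
        · exact Filter.Eventually.of_forall fun z => Filter.Eventually.of_forall fun w => hb _
        · refine Filter.Eventually.of_forall fun w => ?_
          apply tendsto_const_nhds.congr'
          filter_upwards [eventually_ge_atTop (y - w)] with z hz
          rw [hge (z + w) (by linarith), Psip_eq hs, if_neg (lt_irrefl _)]
      have hlim2 : Tendsto (hop σ (∫ ω, V ω ∂P) fun y => Psip P V (r y)) atTop (nhds 0) := by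
        apply hlim.congr'
        filter_upwards [eventually_ge_atTop (0:ℝ)] with z hz
        rw [hop, if_pos hz]
      have h3 := A_top (σ := σ) hN (hop_meas σ _ hm) (hop_abs σ hb (EV_abs hVm hV hs)) hlim2
      rw [← he] at h3
      refine tendsto_nhds_unique h3 (tendsto_const_nhds.congr' ?_)
      filter_upwards [eventually_ge_atTop y] with x hx
      exact (hge x hx).symm
    rw [Psit, if_neg h]; exact hM0

end Esec

/-- Among nondecreasing functions with values in `[m,M]`, (C⁺) has a maximal
solution; it is not constant, and it dominates every solution of (E) with values in `[m,M]`. -/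
theorem stmt13 {Ω : Type*} [MeasurableSpace Ω] (P : Measure Ω) [IsProbabilityMeasure P]
    (V : Ω → ℝ) (hVmeas : Measurable V) (hV : Integrable V P)
    (m M : ℝ) (hsupp : SuppIoo P V m M)
    (σ : ℝ) (hσ : 0 < σ) (N : ℕ) (hN : 1 ≤ N) :
    ∃ Rstar : ℝ → ℝ, Monotone Rstar ∧ (∀ x, Rstar x ∈ Set.Icc m M) ∧
      SolvesCp P V σ N Rstar ∧
      (∀ r : ℝ → ℝ, Monotone r → (∀ x, r x ∈ Set.Icc m M) → SolvesCp P V σ N r →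
        ∀ x, r x ≤ Rstar x) ∧
      (¬ ∃ c : ℝ, ∀ x, Rstar x = c) ∧
      (∀ F : ℝ → ℝ, (∀ x, F x ∈ Set.Icc m M) → SolvesE P V σ N F →
        ∀ x, F x ≤ Rstar x) := by
  have hVm := hVmeas
  have hs := hsupp
  have hb : ∀ (R : ℝ → ℝ) (y : ℝ), |Psit P V M (R y)| ≤ |m| + |M| :=
    fun R y => Psit_abs hVm hV hs (R y)
  -- equivalence of (C⁺) with the fixed point equation
  have hCp : ∀ R : ℝ → ℝ, Measurable R → (∀ y, Psip P V (R y) = Psit P V M (R y)) →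
      (SolvesCp P V σ N R ↔ ∀ x, R x = TopR P V M σ N R x) := by
    intro R hR he
    unfold SolvesCp TopR
    simp_rw [he]
    refine forall_congr' fun x => ?_
    rw [Cp_rhs hσ hN x (PR_meas hVm hV hs hR) (hb R) (EV_abs hVm hV hs)]
  let R : ℕ → ℝ → ℝ := fun n => Nat.rec (fun _ => M) (fun _ f => TopR P V M σ N f) n
  have hR0 : R 0 = fun _ => M := rfl
  have hRs : ∀ n, R (n + 1) = TopR P V M σ N (R n) := fun n => rfl
  have hRmono : ∀ n, Monotone (R n) := by
    intro n
    induction n with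
    | zero => rw [hR0]; exact monotone_const
    | succ n ih => rw [hRs]; exact TopR_monotone hVm hV hs hN ih
  have hRmeas : ∀ n, Measurable (R n) := fun n => (hRmono n).measurable
  have hRge : ∀ n x, m ≤ R n x := by
    intro n x
    cases n with
    | zero => exact hs.1.le
    | succ n => rw [hRs]; exact TopR_ge hVm hV hs hN (hRmeas n) x
  have hRle : ∀ n x, R n x ≤ M := by
    intro n x
    cases n with
    | zero => exact le_rfl
    | succ n => rw [hRs]; exact (TopR_lt hVm hV hs hσ hN (hRmeas n) x).le
  have hRstep : ∀ n x, R (n + 1) x ≤ R n x := by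
    intro n
    induction n with
    | zero => intro x; exact hRle 1 x
    | succ n ih =>
      intro x
      rw [hRs (n + 1), hRs n]
      exact TopR_le hVm hV hs hN (hRmeas (n + 1)) (hRmeas n) ih x
  have hbdd : ∀ x, BddBelow (Set.range fun n => R n x) := by
    rintro x
    refine ⟨m, ?_⟩
    rintro _ ⟨n, rfl⟩
    exact hRge n x
  let S : ℝ → ℝ := fun x => ⨅ n, R n x
  have hlim : ∀ x, Tendsto (fun n => R n x) atTop (nhds (S x)) := fun x =>
    tendsto_atTop_ciInf (antitone_nat_of_succ_le fun n => hRstep n x) (hbdd x)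
  have hSle : ∀ n x, S x ≤ R n x := fun n x => ciInf_le (hbdd x) n
  have hSmono : Monotone S := fun a b hab =>
    le_of_tendsto_of_tendsto' (hlim a) (hlim b) fun n => hRmono n hab
  have hSm : Measurable S := hSmono.measurable
  have hSfix : ∀ x, S x = TopR P V M σ N S x := by
    intro x
    have h1 := TopR_tendsto (σ := σ) hVm hV hs hN hRmeas hSle hlim x
    have h2 := (hlim x).comp (tendsto_add_atTop_nat 1)
    exact tendsto_nhds_unique h2 h1
  have hSlt : ∀ x, S x < M := fun x => by
    rw [hSfix x]; exact TopR_lt hVm hV hs hσ hN hSm x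
  have hSge : ∀ x, m ≤ S x := fun x => le_ciInf fun n => hRge n x
  have hdom : ∀ f : ℝ → ℝ, Measurable f → (∀ x, f x ≤ M) → (∀ x, f x ≤ TopR P V M σ N f x) →
      ∀ x, f x ≤ S x := by
    intro f hf hfM hfT
    have : ∀ n x, f x ≤ R n x := by
      intro n
      induction n with
      | zero => exact hfM
      | succ n ih =>
        intro x
        rw [hRs]
        exact (hfT x).trans (TopR_le hVm hV hs hN hf (hRmeas n) ih x)
    exact fun x => le_ciInf fun n => this n x
  refine ⟨S, hSmono, fun x => ⟨hSge x, (hSlt x).le⟩, ?_, ?_, ?_, ?_⟩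
  · refine (hCp S hSm fun y => ?_).2 hSfix
    rw [Psit, if_pos (hSlt y)]
  · intro r hr hr2 hrS
    have h1 := (hCp r hr.measurable (Cp_Psip_eq hVm hV hs hσ hN hr hr2 hrS)).1 hrS
    exact hdom r hr.measurable (fun x => (hr2 x).2) fun x => (h1 x).le
  · rintro ⟨c, hc⟩
    have hcM : c < M := by rw [← hc 0]; exact hSlt 0
    have hl : Tendsto (hop σ (∫ ω, V ω ∂P) fun y => Psit P V M (S y)) atTop
        (nhds (Psit P V M c)) := by
      apply tendsto_const_nhds.congr'
      filter_upwards [eventually_ge_atTop (0:ℝ)] with z hz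
      rw [hop, if_pos hz]
      simp [hc]
    have h3 := A_top (σ := σ) hN (hop_meas σ _ (PR_meas hVm hV hs hSm))
      (hop_abs σ (hb S) (EV_abs hVm hV hs)) hl
    have h4 : Tendsto (Aop σ N (hop σ (∫ ω, V ω ∂P) fun y => Psit P V M (S y))) atTop
        (nhds c) := by
      apply tendsto_const_nhds.congr
      intro x
      rw [← hc x]; exact hSfix x
    exact (Psit_gt hVm hV hs hcM).ne (tendsto_nhds_unique h4 h3)
  · intro F hF hE
    obtain ⟨h1, h2⟩ := E_le hVm hV hs hσ hN hF hE
    exact hdom F h1 (fun x => (hF x).2) h2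
end

section
/- Let σ > 0 and N ≥ 2 an integer, assume Π⁺ is continuously differentiable on (m, M), that Ψ⁺ₓ(M) = lim_{x→M⁻} (d/dx)Ψ⁺(x) = 1, and that there exist an integer n ≥ 1 and a real constant k ∈ (0, ∞) such that lim_{x→M⁻} (Ψ⁺(x) − x)/(M − x)^{n+1} = 1/k. Let R : ℝ → [m, M] be a nondecreasing solution of equation (C⁺) with R(x) < M for all x and lim_{x→∞} R(x) = M. Then M − R(x) ∼ ((N/(N−1))·(n/k))^{−1/n}·(log x)^{−1/n} as x → ∞, i.e. the ratio of the two sides converges to 1. -/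
open MeasureTheory Filter Set

namespace Core16

/-- step 1 : `S / A → 1`. -/
lemma step1 (r : ℝ) (hr0 : 0 < r) (hr : r ≤ 1/2) (S A D U : ℝ → ℝ) (w : ℝ)
    (hS : ∀ x, 0 < S x) (hA : ∀ x, 0 < x → 0 < A x) (hSA : ∀ x, 0 < x → S x ≤ A x)
    (hxA : ∀ x y, 0 < x → x ≤ y → x * A x ≤ y * A y)
    (hD : ∀ x, 0 < x → D x = r * S x + (1 - r) * A x)
    (hUD : ∀ ε > 0, ∀ᶠ x in atTop, (1 - ε) * D x ≤ U x)
    (hlow : ∀ᶠ x in atTop, (1 - w / x) * U (x + √x) ≤ S x) :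
    ∀ ε > 0, ∀ᶠ x in atTop, (1 - ε) * A x ≤ S x := by
  intro ε hε
  obtain ⟨e, he0, he1, he2⟩ : ∃ e : ℝ, 0 < e ∧ e < 1 ∧ 6 * e ≤ ε := by
    refine ⟨min (1/2) (ε / 6), by positivity, ?_, ?_⟩
    · exact lt_of_le_of_lt (min_le_left _ _) (by norm_num)
    · have := min_le_right (1/2) (ε / 6); linarith
  have hs : Tendsto (fun x : ℝ => x + √x) atTop atTop :=
    tendsto_atTop_mono (fun x => by simp) tendsto_id
  have hsq : ∀ᶠ x : ℝ in atTop, 1 / √x ≤ e := by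
    have : Tendsto (fun x : ℝ => 1 / √x) atTop (nhds 0) := tendsto_const_nhds.div_atTop Real.tendsto_sqrt_atTop
    exact (this.eventually (gt_mem_nhds he0)).mono fun x hx => hx.le
  have hw : ∀ᶠ x : ℝ in atTop, w / x ≤ e := by
    have : Tendsto (fun x : ℝ => w / x) atTop (nhds 0) := tendsto_const_nhds.div_atTop tendsto_id
    exact (this.eventually (gt_mem_nhds he0)).mono fun x hx => hx.le
  have key := (hs.eventually (hUD e he0)).and (hsq.and (hw.and (hlow.and (eventually_gt_atTop (0:ℝ)))))
  obtain ⟨X, hX⟩ := eventually_atTop.1 key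
  have hX0 : 0 < X := (hX X le_rfl).2.2.2.2
  -- infimum
  set s : Set ℝ := (fun y => S y / A y) '' Ici X with hsdef
  have hbdd : BddBelow s := ⟨0, by
    rintro _ ⟨y, hy, rfl⟩
    have hy0 : 0 < y := lt_of_lt_of_le hX0 hy
    exact (div_pos (hS y) (hA y hy0)).le⟩
  have hne : s.Nonempty := ⟨_, X, self_mem_Ici, rfl⟩
  set ι := sInf s with hι
  have hιle : ∀ y, X ≤ y → ι * A y ≤ S y := by
    intro y hy
    have hy0 : 0 < y := lt_of_lt_of_le hX0 hy
    have h1 : ι ≤ S y / A y := csInf_le hbdd ⟨y, hy, rfl⟩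
    rwa [le_div_iff₀ (hA y hy0)] at h1
  have hι0 : 0 ≤ ι := le_csInf hne (by
    rintro _ ⟨y, hy, rfl⟩
    have hy0 : 0 < y := lt_of_lt_of_le hX0 hy
    exact (div_pos (hS y) (hA y hy0)).le)
  have hι1 : ι ≤ 1 := by
    have h1 := hιle X le_rfl
    have h2 := hSA X hX0
    have h3 := hA X hX0
    by_contra hcon
    push Not at hcon
    nlinarith
  have hmain : (1 - e) * ((1 - e) * ((1 - e) * (r * ι + (1 - r)))) ≤ ι := by
    apply le_csInf hne
    rintro _ ⟨x, hx, rfl⟩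
    obtain ⟨h1, h2, h3, h4, h5⟩ := hX x hx
    have hsx := Real.sqrt_pos.2 h5
    have hx' : X ≤ x + √x := le_trans hx (by linarith)
    have hy0 : 0 < x + √x := by linarith
    have hAx := hA x h5
    simp only
    rw [le_div_iff₀ hAx]
    have hAy : (1 - e) * A x ≤ A (x + √x) := by
      have h6 := hxA x (x + √x) h5 (by linarith)
      have h7 : √x * √x = x := Real.mul_self_sqrt h5.le
      rw [div_le_iff₀ hsx] at h2
      have h8 : (1 - e) * (x + √x) ≤ x := by nlinarith
      have h9 : (x + √x) * ((1 - e) * A x) ≤ (x + √x) * A (x + √x) := by nlinarith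
      exact le_of_mul_le_mul_left h9 hy0
    have hDy : (r * ι + (1 - r)) * ((1 - e) * A x) ≤ D (x + √x) := by
      rw [hD _ hy0]
      have h6 := hιle _ hx'
      have h7 : (r * ι + (1 - r)) * ((1 - e) * A x) ≤ (r * ι + (1 - r)) * A (x + √x) :=
        mul_le_mul_of_nonneg_left hAy (by nlinarith)
      nlinarith
    have hDnn : 0 ≤ D (x + √x) := le_trans (by
      have : 0 ≤ r * ι + (1 - r) := by nlinarith
      have : 0 ≤ (1 - e) * A x := mul_nonneg (by linarith) hAx.le
      positivity) hDy
    have hUnn : 0 ≤ U (x + √x) := le_trans (mul_nonneg (by linarith) hDnn) h1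
    calc (1 - e) * ((1 - e) * ((1 - e) * (r * ι + (1 - r)))) * A x
        = (1 - e) * ((1 - e) * ((r * ι + (1 - r)) * ((1 - e) * A x))) := by ring
      _ ≤ (1 - e) * ((1 - e) * D (x + √x)) := by
          apply mul_le_mul_of_nonneg_left _ (by linarith)
          exact mul_le_mul_of_nonneg_left hDy (by linarith)
      _ ≤ (1 - e) * U (x + √x) := mul_le_mul_of_nonneg_left h1 (by linarith)
      _ ≤ (1 - w / x) * U (x + √x) := mul_le_mul_of_nonneg_right (by linarith) hUnn
      _ ≤ S x := h4
  have hfin : 1 - ε ≤ ι := by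
    have h1 : 0 ≤ r * ι + (1 - r) := by nlinarith
    have h1' : r * ι + (1 - r) ≤ 1 := by nlinarith
    have h2 : 1 - 3 * e ≤ (1 - e) * ((1 - e) * (1 - e)) := by nlinarith [mul_pos he0 he0, mul_pos he0 (mul_pos he0 he0)]
    have h3 : (1 - 3 * e) * (r * ι + (1 - r)) ≤ ι := by nlinarith
    have h4 : r * ι + (1 - r) - 3 * e ≤ ι := by nlinarith
    nlinarith
  filter_upwards [eventually_ge_atTop X] with x hx
  have := hιle x hx
  have := hA x (lt_of_lt_of_le hX0 hx)
  nlinarith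

/-- step 2 : polynomial lower bound. -/
lemma step2 (S A : ℝ → ℝ) (n : ℕ)
    (hA : ∀ x, 0 < x → 0 < A x) (hA0 : Tendsto A atTop (nhds 0))
    (hA' : ∀ x, 0 < x → HasDerivAt A ((S x - A x) / x) x)
    (h1 : ∀ ε > 0, ∀ᶠ x in atTop, (1 - ε) * A x ≤ S x) :
    ∀ ε > 0, ∀ᶠ x in atTop, 1 / √x ≤ ε * A x ^ (n + 1) := by
  intro ε hε
  have hj : (0:ℝ) < 2 * n + 3 := by positivity
  obtain ⟨X, hX⟩ := eventually_atTop.1 ((h1 (1 / (2 * n + 3)) (by positivity)).and (eventually_gt_atTop (0:ℝ)))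
  have hX0 : 0 < X := (hX X le_rfl).2
  set B : ℝ → ℝ := fun x => x * A x ^ (2 * n + 3) with hB
  have hBd : ∀ x, 0 < x → HasDerivAt B (1 * A x ^ (2 * n + 3) + x * (((2 * n + 3 : ℕ) : ℝ) * A x ^ (2 * n + 2) * ((S x - A x) / x))) x := by
    intro x hx
    exact (hasDerivAt_id x).mul ((hA' x hx).pow (2 * n + 3))
  have hmono : MonotoneOn B (Ici X) := by
    apply monotoneOn_of_deriv_nonneg (convex_Ici X)
    · intro x hx
      exact (hBd x (lt_of_lt_of_le hX0 hx)).continuousAt.continuousWithinAt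
    · intro x hx
      rw [interior_Ici] at hx
      exact (hBd x (lt_trans hX0 hx)).differentiableAt.differentiableWithinAt
    · intro x hx
      rw [interior_Ici] at hx
      have hx0 : 0 < x := lt_trans hX0 hx
      rw [(hBd x hx0).deriv]
      have h2 := (hX x (le_of_lt hx)).1
      have h3 := hA x hx0
      have h4 : 1 * A x ^ (2 * n + 3) + x * (((2 * n + 3 : ℕ) : ℝ) * A x ^ (2 * n + 2) * ((S x - A x) / x))
          = A x ^ (2 * n + 2) * (A x + (2 * n + 3) * (S x - A x)) := by
        push_cast
        field_simp
        ring
      rw [h4]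
      apply mul_nonneg (by positivity)
      have h5 : (2 * n + 3) * ((1 - 1 / (2 * n + 3)) * A x) ≤ (2 * n + 3) * S x :=
        mul_le_mul_of_nonneg_left h2 hj.le
      have h6 : (2 * (n:ℝ) + 3) * ((1 - 1 / (2 * n + 3)) * A x) = (2 * n + 3 - 1) * A x := by
        field_simp
      nlinarith
  have hBX : 0 < B X := mul_pos hX0 (pow_pos (hA X hX0) _)
  have hsmall : ∀ᶠ x in atTop, A x < ε ^ 2 * B X := hA0.eventually (gt_mem_nhds (by positivity))
  filter_upwards [eventually_ge_atTop X, hsmall] with x hx hx2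
  have hx0 : 0 < x := lt_of_lt_of_le hX0 hx
  have hAx := hA x hx0
  have h3 : B X ≤ x * A x ^ (2 * n + 3) := hmono self_mem_Ici hx hx
  have h4 : A x * 1 ≤ A x * (ε ^ 2 * (x * A x ^ (2 * n + 2))) := by
    have : ε ^ 2 * B X ≤ ε ^ 2 * (x * A x ^ (2 * n + 3)) := mul_le_mul_of_nonneg_left h3 (by positivity)
    calc A x * 1 ≤ ε ^ 2 * (x * A x ^ (2 * n + 3)) := by linarith
      _ = _ := by ring
  have h5 : 1 ≤ ε ^ 2 * (x * A x ^ (2 * n + 2)) := le_of_mul_le_mul_left h4 hAx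
  rw [div_le_iff₀ (Real.sqrt_pos.2 hx0)]
  have h6 : (1:ℝ) ≤ (ε * A x ^ (n + 1) * √x) ^ 2 := by
    calc (1:ℝ) ≤ _ := h5
      _ = ε ^ 2 * (√x ^ 2 * A x ^ (2 * n + 2)) := by rw [Real.sq_sqrt hx0.le]
      _ = _ := by ring
  by_contra hcon
  push Not at hcon
  have : 0 ≤ ε * A x ^ (n + 1) * √x := by positivity
  nlinarith

lemma log_asymp (F F' : ℝ → ℝ) (κ : ℝ)
    (hF : ∀ᶠ x in atTop, HasDerivAt F (F' x) x)
    (hl : Tendsto (fun x => x * F' x) atTop (nhds κ)) :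
    Tendsto (fun x => F x / Real.log x) atTop (nhds κ) := by
  have half : ∀ (F F' : ℝ → ℝ) (κ : ℝ), (∀ᶠ x in atTop, HasDerivAt F (F' x) x) →
      Tendsto (fun x => x * F' x) atTop (nhds κ) → ∀ a, κ < a → ∀ᶠ x in atTop, F x / Real.log x < a := by
    intro F F' κ hF hl a ha
    obtain ⟨b, hb1, hb2⟩ := exists_between ha
    obtain ⟨X, hX⟩ := eventually_atTop.1 (hF.and ((hl.eventually (gt_mem_nhds hb1)).and (eventually_gt_atTop (1:ℝ))))
    have hX0 : 0 < X := lt_trans one_pos (hX X le_rfl).2.2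
    have hd : ∀ x, X ≤ x → HasDerivAt (fun x => F x - b * Real.log x) (F' x - b * x⁻¹) x := by
      intro x hx
      exact (hX x hx).1.sub ((Real.hasDerivAt_log (by have := (hX x hx).2.2; linarith)).const_mul b)
    have hanti : AntitoneOn (fun x => F x - b * Real.log x) (Ici X) := by
      apply antitoneOn_of_deriv_nonpos (convex_Ici X)
      · intro x hx
        exact (hd x hx).continuousAt.continuousWithinAt
      · intro x hx
        rw [interior_Ici] at hx
        exact (hd x (le_of_lt hx)).differentiableAt.differentiableWithinAt
      · intro x hx
        rw [interior_Ici] at hx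
        rw [(hd x (le_of_lt hx)).deriv]
        obtain ⟨_, h2, h3⟩ := hX x (le_of_lt hx)
        have hx0 : 0 < x := by linarith
        have h4 : F' x = x * F' x * x⁻¹ := by field_simp
        have h5 : x * F' x * x⁻¹ ≤ b * x⁻¹ := mul_le_mul_of_nonneg_right h2.le (by positivity)
        linarith
    have hlog : Tendsto (fun x => (F X - b * Real.log X) / Real.log x) atTop (nhds 0) :=
      tendsto_const_nhds.div_atTop Real.tendsto_log_atTop
    filter_upwards [eventually_ge_atTop X, hlog.eventually (gt_mem_nhds (sub_pos.2 hb2))] with x hx h2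
    have h1 : F x - b * Real.log x ≤ F X - b * Real.log X := hanti self_mem_Ici hx hx
    have hlx : 0 < Real.log x := Real.log_pos (hX x hx).2.2
    rw [div_lt_iff₀ hlx] at h2 ⊢
    nlinarith
  rw [tendsto_order]
  constructor
  · intro a ha
    have := half (fun x => - F x) (fun x => - F' x) (-κ) (hF.mono fun x hx => hx.neg) (by simpa using hl.neg) (-a) (by linarith)
    filter_upwards [this] with x hx
    rw [neg_div] at hx
    linarith
  · exact half F F' κ hF hl

lemma step3_up (r : ℝ) (hr0 : 0 < r) (hr : r ≤ 1/2) (S A D U : ℝ → ℝ) (w C p : ℝ) (n : ℕ)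
    (hp : 0 < p) (hw : 0 ≤ w) (hC : 0 ≤ C)
    (hS : ∀ x, 0 < S x) (hA : ∀ x, 0 < x → 0 < A x) (hSA : ∀ x, 0 < x → S x ≤ A x)
    (hA0 : Tendsto A atTop (nhds 0))
    (hAanti : ∀ x y, 0 < x → x ≤ y → A y ≤ A x)
    (hxA : ∀ x y, 0 < x → x ≤ y → x * A x ≤ y * A y)
    (hD : ∀ x, 0 < x → D x = r * S x + (1 - r) * A x)
    (hUC : ∀ x, U x ≤ C)
    (hUD : ∀ ε > 0, ∀ᶠ x in atTop, D x - U x ≤ (p + ε) * D x ^ (n + 1))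
    (hlow : ∀ᶠ x in atTop, (1 - w / x) * U (x + √x) ≤ S x)
    (h2 : ∀ ε > 0, ∀ᶠ x in atTop, 1 / √x ≤ ε * A x ^ (n + 1)) :
    ∀ ε > 0, ∀ᶠ x in atTop, (1 - r) * (A x - S x) ≤ (p + ε) * A x ^ (n + 1) := by
  intro ε hε
  have hs : Tendsto (fun x : ℝ => x + √x) atTop atTop :=
    tendsto_atTop_mono (fun x => by simp) tendsto_id
  have key := (hs.eventually (hUD (ε/2) (by positivity))).and
    ((h2 (ε / 2 / (1 + w * C)) (by positivity)).and (hlow.and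
      ((hA0.eventually (gt_mem_nhds one_pos)).and (eventually_ge_atTop (1:ℝ)))))
  obtain ⟨X, hX⟩ := eventually_atTop.1 key
  have hX1 : 1 ≤ X := (hX X le_rfl).2.2.2.2
  have hstep : ∀ x, X ≤ x → A x - S x ≤ r * (A (x + √x) - S (x + √x)) + (p + ε) * A x ^ (n + 1) := by
    intro x hx
    obtain ⟨h3, h4, h5, h6, h7⟩ := hX x hx
    have hx0 : 0 < x := by linarith
    have hsx := Real.sqrt_pos.2 hx0
    have hy0 : 0 < x + √x := by linarith
    have hss : √x * √x = x := Real.mul_self_sqrt hx0.le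
    have hAx := hA x hx0
    -- error
    have herr : (1 + w * C) * (1 / √x) ≤ ε / 2 * A x ^ (n + 1) := by
      calc (1 + w * C) * (1 / √x) ≤ (1 + w * C) * (ε / 2 / (1 + w * C) * A x ^ (n + 1)) :=
            mul_le_mul_of_nonneg_left h4 (by positivity)
        _ = _ := by field_simp
    have hAy : A x - A x * (1 / √x) ≤ A (x + √x) := by
      have h6 := hxA x (x + √x) hx0 (by linarith)
      have h8 : (x + √x) * (1 - 1 / √x) ≤ x := by
        have : (x + √x) * (1 - 1 / √x) = x + √x - x / √x - 1 := by field_simp; ring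
        rw [this, Real.div_sqrt]; linarith
      have h9 : (x + √x) * (A x - A x * (1 / √x)) ≤ (x + √x) * A (x + √x) := by nlinarith
      exact le_of_mul_le_mul_left h9 hy0
    have hAe : A x * (1 / √x) ≤ 1 * (1 / √x) := mul_le_mul_of_nonneg_right h6.le (by positivity)
    have hwx : w / x * U (x + √x) ≤ w * C * (1 / √x) := by
      have : w / x * U (x + √x) ≤ w / x * C := mul_le_mul_of_nonneg_left (hUC _) (by positivity)
      have h10 : 1 / x ≤ 1 / √x := one_div_le_one_div_of_le hsx (by
        have : 1 ≤ √x := Real.one_le_sqrt.2 h7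
        nlinarith)
      have : w / x * C = w * C * (1 / x) := by ring
      have : w * C * (1 / x) ≤ w * C * (1 / √x) := mul_le_mul_of_nonneg_left h10 (by positivity)
      linarith
    have hDy := hD _ hy0
    have hDA : D (x + √x) ≤ A x := by
      have := hSA _ hy0
      have := hAanti x (x + √x) hx0 (by linarith)
      nlinarith
    have hD0 : 0 ≤ D (x + √x) := by
      rw [hDy]
      have := hS (x + √x)
      have := hA _ hy0
      have : 0 ≤ 1 - r := by linarith
      positivity
    have hpow : (p + ε / 2) * D (x + √x) ^ (n + 1) ≤ (p + ε / 2) * A x ^ (n + 1) := by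
      gcongr
    nlinarith
  set s : Set ℝ := (fun y => A y - S y) '' Ici X
  have hstar : ∀ x, X ≤ x → (1 - r) * (A x - S x) ≤ (p + ε) * A x ^ (n + 1) := by
    intro x hx
    have hx0 : 0 < x := by linarith
    set s : Set ℝ := (fun y => A y - S y) '' Ici x with hs
    have hbdd : BddAbove s := ⟨A x, by
      rintro _ ⟨y, hy, rfl⟩
      have := hAanti x y hx0 hy
      have := hS y
      simp only; linarith⟩
    have hne : s.Nonempty := ⟨_, x, self_mem_Ici, rfl⟩
    have hle : ∀ y, x ≤ y → A y - S y ≤ sSup s := fun y hy => le_csSup hbdd ⟨y, hy, rfl⟩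
    have hsup : sSup s ≤ r * sSup s + (p + ε) * A x ^ (n + 1) := by
      apply csSup_le hne
      rintro _ ⟨y, hy, rfl⟩
      have hy' : x ≤ y := hy
      have h3 := hstep y (le_trans hx hy)
      have h4 := hle (y + √y) (le_trans hy (by simp))
      have h5 : A y ^ (n + 1) ≤ A x ^ (n + 1) :=
        pow_le_pow_left₀ (hA y (by linarith)).le (hAanti x y hx0 hy) _
      have h6 : (p + ε) * A y ^ (n + 1) ≤ (p + ε) * A x ^ (n + 1) :=
        mul_le_mul_of_nonneg_left h5 (by positivity)
      simp only
      nlinarith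
    have h3 := hle x le_rfl
    nlinarith
  filter_upwards [eventually_ge_atTop X] with x hx using hstar x hx

lemma step3_lo (r : ℝ) (hr0 : 0 < r) (hr : r ≤ 1/2) (S A D U : ℝ → ℝ) (w p : ℝ) (n : ℕ)
    (hp : 0 < p) (hw : 0 ≤ w)
    (hS : ∀ x, 0 < S x) (hA : ∀ x, 0 < x → 0 < A x) (hSA : ∀ x, 0 < x → S x ≤ A x)
    (hA0 : Tendsto A atTop (nhds 0))
    (hAanti : ∀ x y, 0 < x → x ≤ y → A y ≤ A x)
    (hxA : ∀ x y, 0 < x → x ≤ y → x * A x ≤ y * A y)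
    (hD : ∀ x, 0 < x → D x = r * S x + (1 - r) * A x)
    (hDanti : Antitone D)
    (h1 : ∀ ε > 0, ∀ᶠ x in atTop, (1 - ε) * A x ≤ S x)
    (hUD : ∀ q, q < p → ∀ᶠ x in atTop, q * D x ^ (n + 1) ≤ D x - U x)
    (hup : ∀ᶠ x in atTop, S x ≤ U (x - √x) + w / x)
    (h2 : ∀ ε > 0, ∀ᶠ x in atTop, 1 / √x ≤ ε * A x ^ (n + 1)) :
    ∀ q, q < p → ∀ᶠ x in atTop, q * A x ^ (n + 1) ≤ (1 - r) * (A x - S x) := by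
  -- reduce to 0 < q
  suffices hpos : ∀ q, 0 < q → q < p → ∀ᶠ x in atTop, q * A x ^ (n + 1) ≤ (1 - r) * (A x - S x) by
    intro q hq
    obtain ⟨q', h3, h4⟩ := exists_between (max_lt hq hp)
    filter_upwards [hpos q' (lt_of_le_of_lt (le_max_right _ _) h3) h4, eventually_gt_atTop 0] with x hx hx0
    have : 0 < A x ^ (n + 1) := pow_pos (hA x hx0) _
    have : q ≤ q' := (lt_of_le_of_lt (le_max_left _ _) h3).le
    nlinarith
  intro q0 hq00 hq0
  obtain ⟨q, hqq, hqp⟩ := exists_between hq0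
  have hq : 0 < q := lt_trans hq00 hqq
  have hs : Tendsto (fun x : ℝ => x - √x) atTop atTop := by
    apply tendsto_atTop_mono' atTop (f₁ := fun x : ℝ => x / 2)
    · filter_upwards [eventually_ge_atTop 4] with x hx
      have h3 : 2 ≤ √x := by
        rw [show (2:ℝ) = √4 by rw [show (4:ℝ) = 2 ^ 2 by norm_num]; simp]
        exact Real.sqrt_le_sqrt hx
      have hss : √x * √x = x := Real.mul_self_sqrt (by linarith)
      nlinarith
    · exact tendsto_id.atTop_div_const (by norm_num)
  obtain ⟨q1, hq1, hq1p⟩ := exists_between hqp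
  obtain ⟨q2, hq2, hq21⟩ := exists_between hq1
  -- q < q2 < q1 < p
  have hDA : ∀ᶠ x in atTop, q2 * A x ^ (n + 1) ≤ q1 * D x ^ (n + 1) := by
    have hcont : ∀ᶠ e in nhdsWithin (0:ℝ) (Ioi 0), q2 < q1 * (1 - e) ^ (n + 1) := by
      have : Tendsto (fun e : ℝ => q1 * (1 - e) ^ (n + 1)) (nhds 0) (nhds (q1 * (1 - 0) ^ (n + 1))) :=
        Continuous.tendsto (by fun_prop) 0
      have h3 : q2 < q1 * (1 - 0) ^ (n + 1) := by simpa using hq21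
      exact nhdsWithin_le_nhds (this.eventually (lt_mem_nhds h3))
    have hlt1 : ∀ᶠ e in nhdsWithin (0:ℝ) (Ioi 0), e < 1 := nhdsWithin_le_nhds (gt_mem_nhds one_pos)
    obtain ⟨e, ⟨he1, he2⟩, he0⟩ := ((hcont.and hlt1).and self_mem_nhdsWithin).exists
    filter_upwards [h1 e he0, eventually_gt_atTop 0] with x hx hx0
    have hAx := hA x hx0
    have he0' : 0 < e := he0
    have h4 : (1 - e) * A x ≤ D x := by
      rw [hD x hx0]
      nlinarith [mul_nonneg (show 0 ≤ 1 - r by linarith) (sub_nonneg.2 (hSA x hx0))]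
    have h5 : ((1 - e) * A x) ^ (n + 1) ≤ D x ^ (n + 1) :=
      pow_le_pow_left₀ (mul_nonneg (by linarith) hAx.le) h4 _
    rw [mul_pow] at h5
    have h6 : 0 < A x ^ (n + 1) := by positivity
    have : q1 * ((1 - e) ^ (n + 1) * A x ^ (n + 1)) ≤ q1 * D x ^ (n + 1) :=
      mul_le_mul_of_nonneg_left h5 (by linarith)
    nlinarith
  have hev := (hs.eventually (hUD q1 hq1p)).and (hDA.and (hup.and
    ((h2 ((q2 - q) / (2 + w)) (div_pos (by linarith) (by linarith))).and
      ((hA0.eventually (gt_mem_nhds one_pos)).and (eventually_ge_atTop (4:ℝ))))))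
  have hstep : ∀ᶠ x in atTop, 0 < x - √x ∧ x - √x ≤ x ∧ 0 < x ∧
      r * (A (x - √x) - S (x - √x)) + q * A x ^ (n + 1) ≤ A x - S x := by
    filter_upwards [hev] with x hx
    obtain ⟨h3, h4, h5, h6, h7, h8⟩ := hx
    have hx0 : 0 < x := by linarith
    have hsx := Real.sqrt_pos.2 hx0
    have hs2 : 2 ≤ √x := by
      rw [show (2:ℝ) = √4 by rw [show (4:ℝ) = 2 ^ 2 by norm_num]; simp]
      exact Real.sqrt_le_sqrt h8
    have hss : √x * √x = x := Real.mul_self_sqrt hx0.le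
    have hy0 : 0 < x - √x := by nlinarith
    have hAx := hA x hx0
    refine ⟨hy0, by linarith, hx0, ?_⟩
    have herr : (2 + w) * (1 / √x) ≤ (q2 - q) * A x ^ (n + 1) := by
      calc (2 + w) * (1 / √x) ≤ (2 + w) * ((q2 - q) / (2 + w) * A x ^ (n + 1)) :=
            mul_le_mul_of_nonneg_left h6 (by positivity)
        _ = _ := by field_simp
    have hAy : A (x - √x) ≤ A x + 2 * A x * (1 / √x) := by
      have h9 := hxA (x - √x) x hy0 (by linarith)
      have h10 : x ≤ (x - √x) * (1 + 2 * (1 / √x)) := by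
        have : (x - √x) * (1 + 2 * (1 / √x)) = x - √x + 2 * (x / √x) - 2 := by field_simp; ring
        rw [this, Real.div_sqrt]; linarith
      have h11 : (x - √x) * A (x - √x) ≤ (x - √x) * (A x + 2 * A x * (1 / √x)) := by nlinarith
      exact le_of_mul_le_mul_left h11 hy0
    have hAe : A x * (1 / √x) ≤ 1 * (1 / √x) := mul_le_mul_of_nonneg_right h7.le (by positivity)
    have hwx : w / x ≤ w * (1 / √x) := by
      have h10 : 1 / x ≤ 1 / √x := one_div_le_one_div_of_le hsx (by nlinarith)
      have : w / x = w * (1 / x) := by ring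
      rw [this]
      exact mul_le_mul_of_nonneg_left h10 hw
    have hDy := hD _ hy0
    have hDx0 : 0 ≤ D x := by
      rw [hD x hx0]
      have := hS x
      have : 0 ≤ 1 - r := by linarith
      positivity
    have hDD : q1 * D x ^ (n + 1) ≤ q1 * D (x - √x) ^ (n + 1) :=
      mul_le_mul_of_nonneg_left (pow_le_pow_left₀ hDx0 (hDanti (by linarith)) _) (by linarith)
    nlinarith
  -- iterate
  have hiter : ∀ j : ℕ, ∀ᶠ x in atTop, q * (1 - r ^ j) * A x ^ (n + 1) ≤ (1 - r) * (A x - S x) := by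
    intro j
    induction j with
    | zero =>
      filter_upwards [eventually_gt_atTop 0] with x hx
      have := hSA x hx
      simp only [pow_zero, sub_self, mul_zero, zero_mul]
      exact mul_nonneg (by linarith) (by linarith)
    | succ j ih =>
      filter_upwards [hs.eventually ih, hstep] with x h3 ⟨h4, h5, h6, h7⟩
      have h8 : A x ^ (n + 1) ≤ A (x - √x) ^ (n + 1) :=
        pow_le_pow_left₀ (hA x h6).le (hAanti _ _ h4 h5) _
      have hrj : r ^ j ≤ 1 := pow_le_one₀ hr0.le (by linarith)
      have h9 : q * (1 - r ^ j) * A x ^ (n + 1) ≤ (1 - r) * (A (x - √x) - S (x - √x)) :=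
        le_trans (mul_le_mul_of_nonneg_left h8 (mul_nonneg hq.le (by linarith))) h3
      have h10 := mul_le_mul_of_nonneg_left h9 hr0.le
      have h11 := mul_le_mul_of_nonneg_left h7 (show 0 ≤ 1 - r by linarith)
      rw [pow_succ]
      nlinarith
  have hrj : Tendsto (fun j : ℕ => q * (1 - r ^ j)) atTop (nhds (q * (1 - 0))) :=
    ((tendsto_pow_atTop_nhds_zero_of_lt_one hr0.le (by linarith)).const_sub 1).const_mul q
  obtain ⟨j, hj⟩ := (hrj.eventually (lt_mem_nhds (show q0 < q * (1 - 0) by simpa using hqq))).exists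
  filter_upwards [hiter j, eventually_gt_atTop 0] with x hx hx0
  have : 0 < A x ^ (n + 1) := pow_pos (hA x hx0) _
  nlinarith

theorem core (r : ℝ) (hr0 : 0 < r) (hr : r ≤ 1/2) (S D U : ℝ → ℝ) (w C k : ℝ) (n : ℕ)
    (hn : 1 ≤ n) (hk : 0 < k) (hw : 0 ≤ w) (hC : 0 ≤ C)
    (hDpos : ∀ x, 0 < D x) (hDanti : Antitone D) (hD0 : Tendsto D atTop (nhds 0))
    (hUC : ∀ x, U x ≤ C)
    (hSc : Continuous S) (hSanti : Antitone S)
    (hlim : Tendsto (fun x => (D x - U x) / D x ^ (n + 1)) atTop (nhds (1 / k)))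
    (hDS : ∀ x, 0 < x → D x = r * S x + (1 - r) * ((1 / x) * ∫ y in (0:ℝ)..x, S y))
    (hlow : ∀ᶠ x in atTop, (1 - w / x) * U (x + √x) ≤ S x)
    (hup : ∀ᶠ x in atTop, S x ≤ U (x - √x) + w / x) :
    Tendsto (fun x => D x / ((1 / (1 - r) * (n / k)) ^ (-(1:ℝ) / (n:ℝ)) *
      Real.log x ^ (-(1:ℝ) / (n:ℝ)))) atTop (nhds 1) := by
  set A : ℝ → ℝ := fun x => (1 / x) * ∫ y in (0:ℝ)..x, S y with hAdef
  have hp : 0 < 1 / k := by positivity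
  have h1r : 0 < 1 - r := by linarith
  have hs : Tendsto (fun x : ℝ => x + √x) atTop atTop :=
    tendsto_atTop_mono (fun x => by simp) tendsto_id
  have hUDup : ∀ ε > 0, ∀ᶠ x in atTop, D x - U x ≤ (1 / k + ε) * D x ^ (n + 1) := by
    intro ε hε
    filter_upwards [hlim.eventually (gt_mem_nhds (show 1 / k < 1 / k + ε by linarith))] with x hx
    rw [div_lt_iff₀ (pow_pos (hDpos x) _)] at hx
    exact hx.le
  have hUDlo : ∀ q, q < 1 / k → ∀ᶠ x in atTop, q * D x ^ (n + 1) ≤ D x - U x := by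
    intro q hq
    filter_upwards [hlim.eventually (lt_mem_nhds hq)] with x hx
    rw [lt_div_iff₀ (pow_pos (hDpos x) _)] at hx
    exact hx.le
  have hUD1 : ∀ ε > 0, ∀ᶠ x in atTop, (1 - ε) * D x ≤ U x := by
    intro ε hε
    have h3 : Tendsto (fun x => (1 / k + 1) * D x ^ n) atTop (nhds ((1 / k + 1) * 0 ^ n)) :=
      (hD0.pow n).const_mul _
    rw [zero_pow (by omega), mul_zero] at h3
    filter_upwards [hUDup 1 one_pos, h3.eventually (gt_mem_nhds hε)] with x hx hx2
    have h4 := mul_le_mul_of_nonneg_right hx2.le (hDpos x).le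
    rw [pow_succ] at hx
    nlinarith
  have hSpos : ∀ x, 0 < S x := by
    have hw2 : ∀ᶠ x : ℝ in atTop, w / x < 1 := by
      have : Tendsto (fun x : ℝ => w / x) atTop (nhds 0) := tendsto_const_nhds.div_atTop tendsto_id
      exact this.eventually (gt_mem_nhds one_pos)
    have hev : ∀ᶠ x in atTop, 0 < S x := by
      filter_upwards [hw2, hlow, hs.eventually (hUD1 (1/2) (by norm_num))] with x h3 h4 h5
      have h6 := hDpos (x + √x)
      have h7 : 0 < U (x + √x) := by linarith
      have : 0 < (1 - w / x) * U (x + √x) := mul_pos (by linarith) h7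
      linarith
    intro x
    obtain ⟨y, hy1, hy2⟩ := (hev.and (eventually_ge_atTop x)).exists
    exact lt_of_lt_of_le hy1 (hSanti hy2)
  have hii : ∀ a b, IntervalIntegrable S volume a b := fun a b => hSc.intervalIntegrable a b
  have hxA' : ∀ x, 0 < x → x * A x = ∫ y in (0:ℝ)..x, S y := by
    intro x hx
    simp only [hAdef]
    field_simp
  have hA : ∀ x, 0 < x → 0 < A x := by
    intro x hx
    exact mul_pos (by positivity) (intervalIntegral.intervalIntegral_pos_of_pos (hii 0 x) hSpos hx)
  have hSA : ∀ x, 0 < x → S x ≤ A x := by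
    intro x hx
    have h3 : ∫ y in (0:ℝ)..x, S x ≤ ∫ y in (0:ℝ)..x, S y :=
      intervalIntegral.integral_mono_on hx.le (by simp) (hii 0 x) (fun y hy => hSanti hy.2)
    rw [← hxA' x hx, intervalIntegral.integral_const, smul_eq_mul, sub_zero] at h3
    exact le_of_mul_le_mul_left h3 hx
  have hxA : ∀ x y, 0 < x → x ≤ y → x * A x ≤ y * A y := by
    intro x y hx hxy
    rw [hxA' x hx, hxA' y (by linarith), ← intervalIntegral.integral_add_adjacent_intervals (hii 0 x) (hii x y)]
    have : 0 ≤ ∫ u in x..y, S u := intervalIntegral.integral_nonneg hxy (fun u _ => (hSpos u).le)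
    linarith
  have hAd : ∀ x, 0 < x → HasDerivAt A ((S x - A x) / x) x := by
    intro x hx
    have h3 : HasDerivAt (fun x => ∫ y in (0:ℝ)..x, S y) (S x) x :=
      intervalIntegral.integral_hasDerivAt_right (hii 0 x) hSc.stronglyMeasurable.stronglyMeasurableAtFilter hSc.continuousAt
    have h4 := (hasDerivAt_inv hx.ne').mul h3
    have h5 : A = (fun y => y⁻¹) * (fun x => ∫ y in (0:ℝ)..x, S y) := by
      funext y; simp [hAdef]
    rw [← h5] at h4
    refine h4.congr_deriv ?_
    rw [← hxA' x hx]
    field_simp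
    ring
  have hAanti : ∀ x y, 0 < x → x ≤ y → A y ≤ A x := by
    have : AntitoneOn A (Ioi 0) := by
      apply antitoneOn_of_deriv_nonpos (convex_Ioi 0)
      · intro x hx
        exact (hAd x hx).continuousAt.continuousWithinAt
      · intro x hx
        rw [interior_Ioi] at hx
        exact (hAd x hx).differentiableAt.differentiableWithinAt
      · intro x hx
        rw [interior_Ioi] at hx
        rw [(hAd x hx).deriv]
        have := hSA x hx
        exact div_nonpos_of_nonpos_of_nonneg (by linarith) (le_of_lt hx)
    intro x y hx hxy
    exact this hx (lt_of_lt_of_le hx hxy) hxy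
  have hDA : ∀ x, 0 < x → D x = r * S x + (1 - r) * A x := hDS
  have hA0 : Tendsto A atTop (nhds 0) := by
    have h3 : Tendsto (fun x => D x / (1 - r)) atTop (nhds 0) := by simpa using hD0.div_const (1 - r)
    apply squeeze_zero' _ _ h3
    · filter_upwards [eventually_gt_atTop 0] with x hx using (hA x hx).le
    · filter_upwards [eventually_gt_atTop 0] with x hx
      rw [le_div_iff₀ h1r, hDA x hx]
      have := hSpos x
      nlinarith
  have H1 := step1 r hr0 hr S A D U w hSpos hA hSA hxA hDA hUD1 hlow
  have H2 := step2 S A n hA hA0 hAd H1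
  have H3 := step3_up r hr0 hr S A D U w C (1/k) n hp hw hC hSpos hA hSA hA0 hAanti hxA hDA hUC hUDup hlow H2
  have H4 := step3_lo r hr0 hr S A D U w (1/k) n hp hw hSpos hA hSA hA0 hAanti hxA hDA hDanti H1 hUDlo hup H2
  have hρ : Tendsto (fun x => (1 - r) * (A x - S x) / A x ^ (n + 1)) atTop (nhds (1 / k)) := by
    rw [tendsto_order]
    constructor
    · intro a ha
      obtain ⟨b, hb1, hb2⟩ := exists_between ha
      filter_upwards [H4 b hb2, eventually_gt_atTop 0] with x hx hx0
      rw [lt_div_iff₀ (pow_pos (hA x hx0) _)]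
      exact lt_of_lt_of_le (mul_lt_mul_of_pos_right hb1 (pow_pos (hA x hx0) _)) hx
    · intro a ha
      obtain ⟨b, hb1, hb2⟩ := exists_between ha
      filter_upwards [H3 (b - 1/k) (by linarith), eventually_gt_atTop 0] with x hx hx0
      rw [div_lt_iff₀ (pow_pos (hA x hx0) _)]
      rw [add_sub_cancel] at hx
      exact lt_of_le_of_lt hx (mul_lt_mul_of_pos_right hb2 (pow_pos (hA x hx0) _))
  set κ : ℝ := 1 / (1 - r) * (n / k) with hκ
  have hn0 : (0:ℝ) < n := by exact_mod_cast hn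
  have hκ0 : 0 < κ := by positivity
  have hF := log_asymp (fun x => (A x ^ n)⁻¹)
    (fun x => -((n:ℝ) * A x ^ (n - 1) * ((S x - A x) / x)) / (A x ^ n) ^ 2) κ (by
      filter_upwards [eventually_gt_atTop 0] with x hx
      exact ((hAd x hx).pow n).inv (pow_pos (hA x hx) n).ne') (by
      have h3 : Tendsto (fun x => n / (1 - r) * ((1 - r) * (A x - S x) / A x ^ (n + 1))) atTop (nhds (n / (1 - r) * (1 / k))) := hρ.const_mul _
      have h4 : n / (1 - r) * (1 / k) = κ := by rw [hκ]; field_simp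
      rw [h4] at h3
      refine h3.congr' ?_
      filter_upwards [eventually_gt_atTop 0] with x hx
      have hAx := (hA x hx).ne'
      obtain ⟨j, rfl⟩ : ∃ j, n = j + 1 := ⟨n - 1, by omega⟩
      simp only [Nat.add_sub_cancel]
      field_simp
      ring)
  -- D / A → 1
  have hDA1 : Tendsto (fun x => D x / A x) atTop (nhds 1) := by
    rw [tendsto_order]
    constructor
    · intro a ha
      obtain ⟨b, hb1, hb2⟩ := exists_between ha
      filter_upwards [H1 (1 - b) (by linarith), eventually_gt_atTop 0] with x hx hx0
      rw [lt_div_iff₀ (hA x hx0), hDA x hx0]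
      have := hA x hx0
      have h5 := hSA x hx0
      nlinarith [mul_nonneg h1r.le (sub_nonneg.2 h5)]
    · intro a ha
      filter_upwards [eventually_gt_atTop 0] with x hx0
      rw [div_lt_iff₀ (hA x hx0), hDA x hx0]
      have := hA x hx0
      have h5 := hSA x hx0
      nlinarith
  have hG : Tendsto (fun x => (((A x ^ n)⁻¹ / Real.log x) / κ) ^ (-(1:ℝ) / n)) atTop (nhds ((κ / κ) ^ (-(1:ℝ) / n))) :=
    (hF.div_const κ).rpow_const (Or.inl (by rw [div_self hκ0.ne']; exact one_ne_zero))
  rw [div_self hκ0.ne', Real.one_rpow] at hG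
  have hmul := hDA1.mul hG
  rw [mul_one] at hmul
  refine hmul.congr' ?_
  filter_upwards [eventually_gt_atTop 1] with x hx
  have hx0 : 0 < x := by linarith
  have hlx : 0 < Real.log x := Real.log_pos hx
  have hAx := hA x hx0
  have h5 : ((A x ^ n)⁻¹) ^ (-(1:ℝ) / n) = A x := by
    rw [← Real.rpow_natCast, ← Real.rpow_neg hAx.le, ← Real.rpow_mul hAx.le]
    rw [show -(n:ℝ) * (-1 / n) = 1 by field_simp, Real.rpow_one]
  rw [Real.div_rpow (by positivity) hκ0.le, Real.div_rpow (by positivity) hlx.le, h5]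
  have h6 : 0 < κ ^ (-(1:ℝ) / n) := Real.rpow_pos_of_pos hκ0 _
  have h7 : 0 < Real.log x ^ (-(1:ℝ) / n) := Real.rpow_pos_of_pos hlx _
  field_simp

end Core16

namespace Core16

lemma gq_nonneg {σ : ℝ} (hσ : 0 < σ) (z : ℝ) : 0 ≤ gq σ z := by unfold gq; positivity

lemma gq_cont (σ : ℝ) : Continuous (gq σ) := by unfold gq; fun_prop

lemma gq_eq {σ : ℝ} (hσ : 0 < σ) (z : ℝ) :
    gq σ z = ProbabilityTheory.gaussianPDFReal 0 (Real.toNNReal (σ ^ 2)) z := by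
  unfold gq ProbabilityTheory.gaussianPDFReal
  rw [Real.coe_toNNReal _ (sq_nonneg σ), sub_zero, Real.sqrt_mul (by positivity) (σ ^ 2),
    Real.sqrt_sq hσ.le, mul_comm (√(2 * Real.pi)) σ, div_eq_inv_mul]

lemma gq_integrable {σ : ℝ} (hσ : 0 < σ) : Integrable (gq σ) := by
  rw [show gq σ = _ from funext (gq_eq hσ)]
  exact ProbabilityTheory.integrable_gaussianPDFReal _ _

lemma gq_integral {σ : ℝ} (hσ : 0 < σ) : ∫ z, gq σ z = 1 := by
  rw [show gq σ = _ from funext (gq_eq hσ)]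
  apply ProbabilityTheory.integral_gaussianPDFReal_eq_one
  intro h
  rw [Real.toNNReal_eq_zero] at h
  have : 0 < σ ^ 2 := by positivity
  linarith

lemma gq_sq_integrable {σ : ℝ} (hσ : 0 < σ) : Integrable (fun z => gq σ z * z ^ 2) := by
  have h := (integrable_rpow_mul_exp_neg_mul_sq (b := 1 / (2 * σ ^ 2)) (by positivity) (s := 2) (by norm_num)).const_mul
    ((σ * Real.sqrt (2 * Real.pi))⁻¹)
  refine h.congr (Eventually.of_forall fun z => ?_)
  simp only [Real.rpow_two, gq]
  rw [show -(1 / (2 * σ ^ 2)) * z ^ 2 = -(z ^ 2) / (2 * σ ^ 2) by ring]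
  ring

/-- convolution with the Gaussian -/
noncomputable def cv (σ : ℝ) (f : ℝ → ℝ) (x : ℝ) : ℝ := ∫ z, gq σ (x - z) * f z

lemma cv_integrable {σ : ℝ} (hσ : 0 < σ) {f : ℝ → ℝ} (hf : Measurable f) {C : ℝ} (hC : ∀ x, |f x| ≤ C)
    (x : ℝ) : Integrable (fun z => gq σ (x - z) * f z) :=
  ((gq_integrable hσ).comp_sub_left x).mul_bdd hf.aestronglyMeasurable (Eventually.of_forall hC)

lemma cv_const {σ : ℝ} (hσ : 0 < σ) (c x : ℝ) : ∫ z, gq σ (x - z) * c = c := by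
  rw [integral_mul_const, integral_sub_left_eq_self (gq σ) volume x, gq_integral hσ, one_mul]

lemma cv_mono {σ : ℝ} (hσ : 0 < σ) {f g : ℝ → ℝ} (hf : Measurable f) (hg : Measurable g)
    {C C' : ℝ} (hC : ∀ x, |f x| ≤ C) (hC' : ∀ x, |g x| ≤ C') (h : ∀ x, f x ≤ g x) (x : ℝ) :
    cv σ f x ≤ cv σ g x :=
  integral_mono (cv_integrable hσ hf hC x) (cv_integrable hσ hg hC' x)
    (fun z => mul_le_mul_of_nonneg_left (h z) (gq_nonneg hσ _))

lemma cv_antitone {σ : ℝ} (hσ : 0 < σ) {f : ℝ → ℝ} (hf : Antitone f) {C : ℝ} (hC : ∀ x, |f x| ≤ C) :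
    Antitone (cv σ f) := by
  have key : ∀ x, cv σ f x = ∫ u, gq σ u * f (x - u) := by
    intro x
    unfold cv
    rw [← integral_sub_left_eq_self (fun u => gq σ u * f (x - u)) volume x]
    simp
  intro x y hxy
  rw [key, key]
  have hm : Measurable f := hf.measurable
  have hIg : ∀ x, Integrable (fun u => gq σ u * f (x - u)) := fun x =>
    (gq_integrable hσ).mul_bdd (hm.comp (measurable_const.sub measurable_id)).aestronglyMeasurable
      (Eventually.of_forall fun u => hC _)
  exact integral_mono (hIg y) (hIg x)
    (fun z => mul_le_mul_of_nonneg_left (hf (by linarith)) (gq_nonneg hσ _))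

lemma cv_bounds {σ : ℝ} (hσ : 0 < σ) {f : ℝ → ℝ} (hf : Measurable f) {C : ℝ} (h0 : ∀ x, 0 ≤ f x)
    (hC : ∀ x, f x ≤ C) (x : ℝ) : 0 ≤ cv σ f x ∧ cv σ f x ≤ C := by
  refine ⟨integral_nonneg fun z => mul_nonneg (gq_nonneg hσ _) (h0 z), ?_⟩
  have hC' : ∀ x, |f x| ≤ C := fun x => by rw [abs_of_nonneg (h0 x)]; exact hC x
  have := cv_mono hσ hf measurable_const hC' (C' := |C|) (fun _ => le_rfl) hC x
  rwa [cv, cv, cv_const hσ] at this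

noncomputable def va (σ : ℝ) : ℝ := ∫ z, gq σ z * z ^ 2

lemma va_nonneg {σ : ℝ} (hσ : 0 < σ) : 0 ≤ va σ :=
  integral_nonneg fun z => mul_nonneg (gq_nonneg hσ _) (sq_nonneg z)

lemma cv_affine {σ : ℝ} (hσ : 0 < σ) (a b x : ℝ) :
    Integrable (fun z => gq σ (x - z) * (a + b * (x - z) ^ 2)) ∧
    ∫ z, gq σ (x - z) * (a + b * (x - z) ^ 2) = a + b * va σ := by
  have h1 : Integrable (fun z => a * gq σ (x - z)) := ((gq_integrable hσ).comp_sub_left x).const_mul a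
  have h2 : Integrable (fun z => b * (gq σ (x - z) * (x - z) ^ 2)) :=
    ((gq_sq_integrable hσ).comp_sub_left x).const_mul b
  have h3 : (fun z => gq σ (x - z) * (a + b * (x - z) ^ 2)) =
      fun z => a * gq σ (x - z) + b * (gq σ (x - z) * (x - z) ^ 2) := by
    funext z; ring
  rw [h3]
  refine ⟨h1.add h2, ?_⟩
  rw [integral_add h1 h2, integral_const_mul, integral_const_mul,
    integral_sub_left_eq_self (gq σ) volume x,
    integral_sub_left_eq_self (fun z => gq σ z * z ^ 2) volume x, gq_integral hσ]
  simp [va]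

lemma cv_lower {σ : ℝ} (hσ : 0 < σ) {f : ℝ → ℝ} (hf : Antitone f) {C : ℝ} (h0 : ∀ x, 0 ≤ f x)
    (hC : ∀ x, f x ≤ C) (x L : ℝ) (hL : 0 < L) : (1 - va σ / L ^ 2) * f (x + L) ≤ cv σ f x := by
  have hC' : ∀ x, |f x| ≤ C := fun x => by rw [abs_of_nonneg (h0 x)]; exact hC x
  obtain ⟨h1, h2⟩ := cv_affine hσ (f (x + L)) (-(f (x + L) / L ^ 2)) x
  have h3 : (1 - va σ / L ^ 2) * f (x + L) = f (x + L) + -(f (x + L) / L ^ 2) * va σ := by ring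
  rw [h3, ← h2]
  apply integral_mono h1 (cv_integrable hσ hf.measurable hC' x)
  intro z
  apply mul_le_mul_of_nonneg_left _ (gq_nonneg hσ _)
  have hfx := h0 (x + L)
  rcases le_total z (x + L) with hz | hz
  · have := hf hz
    have : 0 ≤ f (x + L) / L ^ 2 * (x - z) ^ 2 := by positivity
    linarith
  · have h4 : 1 ≤ (x - z) ^ 2 / L ^ 2 := by
      rw [one_le_div (by positivity)]; nlinarith
    have h5 := h0 z
    have h6 : f (x + L) / L ^ 2 * (x - z) ^ 2 = f (x + L) * ((x - z) ^ 2 / L ^ 2) := by ring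
    nlinarith

lemma cv_upper {σ : ℝ} (hσ : 0 < σ) {f : ℝ → ℝ} (hf : Antitone f) {C : ℝ} (h0 : ∀ x, 0 ≤ f x)
    (hC : ∀ x, f x ≤ C) (x L : ℝ) (hL : 0 < L) : cv σ f x ≤ f (x - L) + C * va σ / L ^ 2 := by
  have hC' : ∀ x, |f x| ≤ C := fun x => by rw [abs_of_nonneg (h0 x)]; exact hC x
  obtain ⟨h1, h2⟩ := cv_affine hσ (f (x - L)) (C / L ^ 2) x
  have h3 : f (x - L) + C * va σ / L ^ 2 = f (x - L) + C / L ^ 2 * va σ := by ring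
  rw [h3, ← h2]
  apply integral_mono (cv_integrable hσ hf.measurable hC' x) h1
  intro z
  apply mul_le_mul_of_nonneg_left _ (gq_nonneg hσ _)
  have hfx := h0 (x - L)
  have hC0 : 0 ≤ C := (h0 x).trans (hC x)
  rcases le_total (x - L) z with hz | hz
  · have := hf hz
    have : 0 ≤ C / L ^ 2 * (x - z) ^ 2 := by positivity
    linarith
  · have h4 : 1 ≤ (x - z) ^ 2 / L ^ 2 := by
      rw [one_le_div (by positivity)]; nlinarith
    have h5 := hC z
    have h6 : C / L ^ 2 * (x - z) ^ 2 = C * ((x - z) ^ 2 / L ^ 2) := by ring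
    nlinarith

lemma cv_continuous {σ : ℝ} (hσ : 0 < σ) {f : ℝ → ℝ} (hf : Measurable f) {C : ℝ} (hC : ∀ x, |f x| ≤ C) :
    Continuous (cv σ f) := by
  rw [continuous_iff_continuousAt]
  intro x0
  have hC0 : 0 ≤ C := (abs_nonneg _).trans (hC 0)
  set b : ℝ := 1 / (4 * σ ^ 2)
  set c : ℝ := Real.exp (1 / (2 * σ ^ 2)) / (σ * Real.sqrt (2 * Real.pi))
  have hb : 0 < b := by positivity
  have hc : 0 < c := by positivity
  unfold cv
  apply continuousAt_of_dominated (bound := fun z => c * Real.exp (-b * (x0 - z) ^ 2) * C)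
  · exact Eventually.of_forall fun x => (cv_integrable hσ hf hC x).aestronglyMeasurable
  · filter_upwards [Metric.ball_mem_nhds x0 one_pos] with x hx
    refine Eventually.of_forall fun z => ?_
    rw [norm_mul, Real.norm_eq_abs, abs_of_nonneg (gq_nonneg hσ _)]
    apply mul_le_mul _ (hC z) (abs_nonneg _) (by positivity)
    unfold gq
    simp only [c]
    rw [div_mul_eq_mul_div, ← Real.exp_add]
    gcongr
    rw [Metric.mem_ball, Real.dist_eq, abs_lt] at hx
    have h1 : (x0 - z) ^ 2 ≤ 2 * (x - z) ^ 2 + 2 := by nlinarith [sq_nonneg (x - z + (x - x0))]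
    have h2 : 1 / (2 * σ ^ 2) + -b * (x0 - z) ^ 2 - -(x - z) ^ 2 / (2 * σ ^ 2)
        = (2 * (x - z) ^ 2 + 2 - (x0 - z) ^ 2) / (4 * σ ^ 2) := by
      simp only [b]; field_simp; ring
    have h3 : 0 ≤ (2 * (x - z) ^ 2 + 2 - (x0 - z) ^ 2) / (4 * σ ^ 2) := div_nonneg (by linarith) (by positivity)
    linarith
  · exact ((((integrable_exp_neg_mul_sq hb).comp_sub_left x0).const_mul c)).mul_const C
  · refine Eventually.of_forall fun z => ?_
    exact (((gq_cont σ).comp (continuous_id.sub continuous_const)).mul continuous_const).continuousAt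

lemma prod_int {σ : ℝ} (hσ : 0 < σ) {f : ℝ → ℝ} (hf : Measurable f) {C : ℝ} (hC : ∀ x, |f x| ≤ C) (x : ℝ) :
    Integrable (Function.uncurry fun y z => gq σ (y - z) * f z)
      ((volume.restrict (Set.uIoc 0 x)).prod volume) := by
  have hmeas : Measurable (Function.uncurry fun y z => gq σ (y - z) * f z) := by
    have := (gq_cont σ).measurable
    exact (this.comp (measurable_fst.sub measurable_snd)).mul (hf.comp measurable_snd)
  rw [integrable_prod_iff hmeas.aestronglyMeasurable]
  refine ⟨Eventually.of_forall fun y => cv_integrable hσ hf hC y, ?_⟩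
  have : IsFiniteMeasure ((volume : Measure ℝ).restrict (Set.uIoc 0 x)) := ⟨by
    rw [Measure.restrict_apply_univ, Set.uIoc]; exact measure_Ioc_lt_top⟩
  apply Integrable.of_bound (C := C)
  · exact hmeas.norm.stronglyMeasurable.integral_prod_right.aestronglyMeasurable
  · refine Eventually.of_forall fun y => ?_
    have hh := cv_bounds hσ (f := fun z => |f z|) (measurable_abs.comp hf) (fun z => abs_nonneg _) hC y
    have : ∫ z, ‖Function.uncurry (fun y z => gq σ (y - z) * f z) (y, z)‖ = cv σ (fun z => |f z|) y := by
      unfold cv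
      congr 1
      funext z
      simp only [Function.uncurry, norm_mul, Real.norm_eq_abs]
      rw [abs_of_nonneg (gq_nonneg hσ _)]
    rw [this, Real.norm_eq_abs, abs_of_nonneg hh.1]
    exact hh.2

lemma gqbar_int {σ : ℝ} (hσ : 0 < σ) {f : ℝ → ℝ} (hf : Measurable f) {C : ℝ} (hC : ∀ x, |f x| ≤ C) (x : ℝ)
    (hx : 0 < x) : Integrable (fun z => gqbar σ x z * f z) ∧
    ∫ z, gqbar σ x z * f z = (1 / x) * ∫ y in (0:ℝ)..x, cv σ f y := by
  have h1 := prod_int hσ hf hC x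
  have h2 : (fun z => gqbar σ x z * f z) = fun z => (1 / x) * ∫ y in (0:ℝ)..x, gq σ (y - z) * f z := by
    funext z
    rw [gqbar, if_neg hx.ne', intervalIntegral.integral_mul_const]
    ring
  rw [h2]
  constructor
  · have := h1.integral_prod_right
    simp only [Function.uncurry, Set.uIoc_of_le hx.le] at this
    simp only [intervalIntegral.integral_of_le hx.le]
    exact this.const_mul _
  · rw [integral_const_mul, ← intervalIntegral_integral_swap h1]
    rfl

lemma cv_sub {σ : ℝ} (hσ : 0 < σ) {f : ℝ → ℝ} (hf : Measurable f) {C : ℝ} (hC : ∀ x, |f x| ≤ C) (M x : ℝ) :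
    cv σ (fun z => M - f z) x = M - cv σ f x := by
  unfold cv
  have : (fun z => gq σ (x - z) * (M - f z)) = fun z => gq σ (x - z) * M - gq σ (x - z) * f z := by
    funext z; ring
  rw [this, integral_sub (((gq_integrable hσ).comp_sub_left x).mul_const M) (cv_integrable hσ hf hC x),
    cv_const hσ]

theorem mid (σ : ℝ) (hσ : 0 < σ) (ψ R : ℝ → ℝ) (hψ : Monotone ψ) (E M : ℝ) (hE : ∀ x, E ≤ ψ x)
    (hM : ∀ x, ψ x ≤ M) (N : ℕ) (hN : 2 ≤ N) (n : ℕ) (hn : 1 ≤ n) (k : ℝ) (hk : 0 < k)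
    (hlim : Tendsto (fun x : ℝ => (ψ x - R x) / (M - R x) ^ (n + 1)) atTop (nhds (1 / k)))
    (hRm : Monotone R) (hRlt : ∀ x, R x < M) (hRtop : Tendsto R atTop (nhds M))
    (hsol : ∀ x : ℝ, R x =
    (∫ z in Set.Ioi (0:ℝ),
      ((1 / (N:ℝ)) * gq σ (x - z) + (((N:ℝ) - 1) / (N:ℝ)) * gqbar σ x z) *
        ∫ y, ψ y * gq σ (z - y)) +
    E * ∫ z in Set.Iio (0:ℝ),
        ((1 / (N:ℝ)) * gq σ (x - z) + (((N:ℝ) - 1) / (N:ℝ)) * gqbar σ x z)) :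
    Tendsto (fun x : ℝ => (M - R x) /
        ((((N:ℝ) / ((N:ℝ) - 1)) * ((n:ℝ) / k)) ^ (-(1:ℝ) / (n:ℝ)) *
          Real.log x ^ (-(1:ℝ) / (n:ℝ))))
      atTop (nhds 1) := by
  have hN2 : (2:ℝ) ≤ N := by exact_mod_cast hN
  set r : ℝ := 1 / (N:ℝ) with hr
  have hr0 : 0 < r := by positivity
  have hr2 : r ≤ 1 / 2 := one_div_le_one_div_of_le (by norm_num) hN2
  have h1r : ((N:ℝ) - 1) / N = 1 - r := by rw [hr]; field_simp
  have hNr : (N:ℝ) / (N - 1) = 1 / (1 - r) := by rw [← h1r, one_div_div]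
  rw [hNr]
  simp only [h1r] at hsol
  set C : ℝ := M - E with hCdef
  have hC0 : 0 ≤ C := by have := hE 0; have := hM 0; linarith
  set U : ℝ → ℝ := fun y => M - ψ y with hU
  have hUa : Antitone U := fun x y hxy => sub_le_sub_left (hψ hxy) M
  have hU0 : ∀ x, 0 ≤ U x := fun x => sub_nonneg.2 (hM x)
  have hUC : ∀ x, U x ≤ C := fun x => sub_le_sub_left (hE x) M
  have hUabs : ∀ x, |U x| ≤ C := fun x => by rw [abs_of_nonneg (hU0 x)]; exact hUC x
  set h : ℝ → ℝ := fun z => if 0 < z then cv σ U z else C with hh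
  have hcU := cv_bounds hσ hUa.measurable hU0 hUC
  have hcUa := cv_antitone hσ hUa hUabs
  have hh0 : ∀ x, 0 ≤ h x := by
    intro x; simp only [hh]; split_ifs
    · exact (hcU x).1
    · exact hC0
  have hhC : ∀ x, h x ≤ C := by
    intro x; simp only [hh]; split_ifs
    · exact (hcU x).2
    · exact le_rfl
  have hha : Antitone h := by
    intro x y hxy
    simp only [hh]
    split_ifs with h1 h2
    · exact hcUa hxy
    · exact (hcU y).2
    · exfalso; linarith
    · exact le_rfl
  have hhabs : ∀ x, |h x| ≤ C := fun x => by rw [abs_of_nonneg (hh0 x)]; exact hhC x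
  -- g = M - h
  set g : ℝ → ℝ := fun z => M - h z with hg
  have hgm : Measurable g := measurable_const.sub hha.measurable
  have hgabs : ∀ x, |g x| ≤ |M| + C := fun x => (abs_sub _ _).trans (by have := hhabs x; linarith)
  have hcvg : ∀ x, cv σ g x = M - cv σ h x := cv_sub hσ hha.measurable hhabs M
  have hSc : Continuous (cv σ h) := cv_continuous hσ hha.measurable hhabs
  have hgpos : ∀ z, 0 < z → g z = ∫ y, ψ y * gq σ (z - y) := by
    intro z hz
    have hψm : Measurable ψ := hψ.measurable
    have hψabs : ∀ x, |ψ x| ≤ |M| + C := by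
      intro x
      have h1 : ψ x = M - U x := by simp [hU]
      rw [h1]
      exact (abs_sub _ _).trans (by have := hUabs x; linarith)
    have h1 : cv σ U z = M - cv σ ψ z := cv_sub hσ hψm hψabs M z
    simp only [hg, hh, if_pos hz, h1, sub_sub_cancel]
    unfold cv
    congr 1; funext y; ring
  have hgneg : ∀ z, z ≤ 0 → g z = E := by
    intro z hz
    simp only [hg, hh, if_neg (not_lt.2 hz), hCdef]; ring
  have hDS : ∀ x, 0 < x → M - R x = r * cv σ h x + (1 - r) * ((1 / x) * ∫ y in (0:ℝ)..x, cv σ h y) := by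
    intro x hx
    obtain ⟨hb1, hb2⟩ := gqbar_int hσ hgm hgabs x hx
    have ha1 := cv_integrable hσ hgm hgabs x
    have hK : (fun z => (r * gq σ (x - z) + (1 - r) * gqbar σ x z) * g z) =
        fun z => r * (gq σ (x - z) * g z) + (1 - r) * (gqbar σ x z * g z) := by funext z; ring
    have hKi : Integrable (fun z => (r * gq σ (x - z) + (1 - r) * gqbar σ x z) * g z) := by
      rw [hK]; exact (ha1.const_mul r).add (hb1.const_mul (1 - r))
    have hR : R x = ∫ z, (r * gq σ (x - z) + (1 - r) * gqbar σ x z) * g z := by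
      rw [hsol x, ← intervalIntegral.integral_Iic_add_Ioi (b := 0) hKi.integrableOn hKi.integrableOn, add_comm]
      congr 1
      · rw [integral_Iic_eq_integral_Iio, ← integral_const_mul]
        apply setIntegral_congr_fun measurableSet_Iio
        intro z hz
        simp only
        rw [hgneg z (le_of_lt hz)]; ring
      · apply setIntegral_congr_fun measurableSet_Ioi
        intro z hz
        simp only
        rw [hgpos z hz]
    rw [hK, integral_add (ha1.const_mul r) (hb1.const_mul (1 - r)), integral_const_mul, integral_const_mul, hb2] at hR
    have h1 : ∫ z, gq σ (x - z) * g z = M - cv σ h x := hcvg x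
    have h2 : ∫ y in (0:ℝ)..x, cv σ g y = x * M - ∫ y in (0:ℝ)..x, cv σ h y := by
      simp only [hcvg]
      rw [intervalIntegral.integral_sub (by simp) (hSc.intervalIntegrable 0 x)]
      simp
    rw [hR, h1, h2]
    field_simp
    ring
  set v := va σ with hv
  have hv0 : 0 ≤ v := va_nonneg hσ
  refine core r hr0 hr2 (cv σ h) (fun x => M - R x) U (8 * v * (1 + C)) C k n hn hk (by positivity) hC0
    (fun x => sub_pos.2 (hRlt x)) (fun x y hxy => sub_le_sub_left (hRm hxy) M) (by simpa using hRtop.const_sub M)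
    hUC hSc (cv_antitone hσ hha hhabs) ?_ hDS ?_ ?_
  · refine hlim.congr fun x => ?_
    simp only [hU]
    congr 1; ring
  · filter_upwards [eventually_gt_atTop (4 * v + 1)] with x hx
    have hx0 : 0 < x := by linarith
    have hsx := Real.sqrt_pos.2 hx0
    set L := √x / 2 with hL
    have hL0 : 0 < L := by positivity
    have hL2 : L ^ 2 = x / 4 := by rw [hL, div_pow, Real.sq_sqrt hx0.le]; norm_num
    have hv1 : v / L ^ 2 ≤ 1 := by rw [hL2, div_le_one (by positivity)]; linarith
    have hvL : v / L ^ 2 = 4 * v / x := by rw [hL2]; field_simp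
    have hvnn : 0 ≤ v / L ^ 2 := by positivity
    have h1 := cv_lower hσ hha hh0 hhC x L hL0
    have h2 : (1 - v / L ^ 2) * U (x + √x) ≤ h (x + L) := by
      have he : x + √x = x + L + L := by rw [hL]; ring
      rw [he]
      simp only [hh]
      split_ifs with hpos
      · exact cv_lower hσ hUa hU0 hUC (x + L) L hL0
      · have := hU0 (x + L + L); have := hUC (x + L + L); nlinarith
    have h3 : (1 - v / L ^ 2) * ((1 - v / L ^ 2) * U (x + √x)) ≤ (1 - v / L ^ 2) * h (x + L) :=
      mul_le_mul_of_nonneg_left h2 (by linarith)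
    have h4 : 1 - 8 * v * (1 + C) / x ≤ (1 - v / L ^ 2) * (1 - v / L ^ 2) := by
      have : 8 * v * (1 + C) / x = 2 * (4 * v / x) + 8 * v * C / x := by ring
      rw [this, ← hvL]
      have : 0 ≤ 8 * v * C / x := by positivity
      nlinarith
    have h5 := mul_le_mul_of_nonneg_right h4 (hU0 (x + √x))
    linarith
  · filter_upwards [eventually_gt_atTop 1] with x hx
    have hx0 : 0 < x := by linarith
    have hsx := Real.sqrt_pos.2 hx0
    have hs1 : 1 ≤ √x := Real.one_le_sqrt.2 hx.le
    have hss : √x * √x = x := Real.mul_self_sqrt hx0.le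
    set L := √x / 2 with hL
    have hL0 : 0 < L := by positivity
    have hL2 : L ^ 2 = x / 4 := by rw [hL, div_pow, Real.sq_sqrt hx0.le]; norm_num
    have h1 := cv_upper hσ hha hh0 hhC x L hL0
    have h2 : h (x - L) ≤ U (x - √x) + C * v / L ^ 2 := by
      have he : x - √x = x - L - L := by rw [hL]; ring
      rw [he]
      simp only [hh]
      rw [if_pos (by rw [hL]; nlinarith)]
      exact cv_upper hσ hUa hU0 hUC (x - L) L hL0
    have h3 : 8 * v * (1 + C) / x = 2 * (C * v / L ^ 2) + 8 * v / x := by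
      rw [hL2]; field_simp; ring
    have : 0 ≤ 8 * v / x := by positivity
    linarith

end Core16

namespace Core16

section prob
variable {Ω : Type*} [MeasurableSpace Ω] (P : Measure Ω) [IsProbabilityMeasure P] (V : Ω → ℝ)

lemma pip_pos {m M : ℝ} (hsupp : SuppIoo P V m M) {y : ℝ} (hy : y < M) : 0 < Pip P V y :=
  ENNReal.toReal_pos (hsupp.2.2.1 y hy).ne' (measure_ne_top _ _)

lemma psip_ge (hVmeas : Measurable V) (hV : Integrable V P) {m M : ℝ} (hsupp : SuppIoo P V m M)
    {y : ℝ} (hy : y < M) : y ≤ Psip P V y := by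
  rw [Psip, le_div_iff₀ (pip_pos P V hsupp hy)]
  have hs : MeasurableSet {ω | V ω > y} := measurableSet_lt measurable_const hVmeas
  have h1 : ∫ ω in {ω | V ω > y}, y ∂P ≤ ∫ ω in {ω | V ω > y}, V ω ∂P :=
    setIntegral_mono_on (integrable_const y).integrableOn hV.integrableOn hs (fun ω hω => le_of_lt hω)
  rw [setIntegral_const, smul_eq_mul, mul_comm] at h1
  exact h1

lemma psip_le (hV : Integrable V P) {m M : ℝ} (hsupp : SuppIoo P V m M)
    {y : ℝ} (hy : y < M) : Psip P V y ≤ M := by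
  rw [Psip, div_le_iff₀ (pip_pos P V hsupp hy)]
  have h1 : ∫ ω in {ω | V ω > y}, V ω ∂P ≤ ∫ ω in {ω | V ω > y}, M ∂P :=
    setIntegral_mono_ae hV.integrableOn (integrable_const M).integrableOn
      (hsupp.2.1.mono fun ω hω => hω.2)
  rw [setIntegral_const, smul_eq_mul, mul_comm] at h1
  exact h1

lemma psip_gen (hVmeas : Measurable V) (hV : Integrable V P) {m M : ℝ} (hsupp : SuppIoo P V m M)
    {y : ℝ} (hy : y < M) (B : Set Ω) (hB : MeasurableSet B) (hsub : {ω | V ω > y} ⊆ B) :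
    ∫ ω in B, V ω ∂P ≤ Psip P V y * (P B).toReal := by
  have hs : MeasurableSet {ω | V ω > y} := measurableSet_lt measurable_const hVmeas
  have hψ := psip_ge P V hVmeas hV hsupp hy
  have hPi := pip_pos P V hsupp hy
  set ψ := Psip P V y with hdef
  have hIg : Integrable (fun ω => V ω - ψ) P := hV.sub (integrable_const ψ)
  have heq : ∀ A : Set Ω, ∫ ω in A, (V ω - ψ) ∂P = ∫ ω in A, V ω ∂P - ψ * (P A).toReal := by
    intro A
    rw [integral_sub hV.integrableOn (integrable_const ψ).integrableOn, setIntegral_const, smul_eq_mul, mul_comm]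
    rfl
  have h0 : ∫ ω in {ω | V ω > y}, (V ω - ψ) ∂P = 0 := by
    rw [heq]
    change Phip P V y - ψ * Pip P V y = 0
    rw [hdef, Psip, div_mul_cancel₀ _ hPi.ne', sub_self]
  have h1 : ∫ ω in B \ {ω | V ω > y}, (V ω - ψ) ∂P ≤ 0 := by
    apply setIntegral_nonpos (hB.diff hs)
    intro ω hω
    have : V ω ≤ y := not_lt.1 hω.2
    linarith
  have h2 := setIntegral_sdiff hs hIg.integrableOn hsub (μ := P)
  rw [h0, heq B] at h2
  linarith

end prob
end Core16

/-- If `N ≥ 2`, `Π⁺` is `C¹` on `(m,M)`, `Ψ⁺ₓ(M) = 1` and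
`(Ψ⁺(x) − x)/(M − x)^{n+1} → 1/k` as `x → M⁻` for some `n ≥ 1` and `k ∈ (0,∞)`, then any
nondecreasing solution `R` of (C⁺) with `R < M` and `R → M` at `∞` satisfies
`M − R(x) ∼ ((N/(N−1))·(n/k))^{−1/n}·(log x)^{−1/n}` as `x → ∞`. -/
theorem stmt16 {Ω : Type*} [MeasurableSpace Ω] (P : Measure Ω) [IsProbabilityMeasure P]
    (V : Ω → ℝ) (hVmeas : Measurable V) (hV : Integrable V P)
    (m M : ℝ) (hsupp : SuppIoo P V m M)
    (σ : ℝ) (hσ : 0 < σ) (N : ℕ) (hN : 2 ≤ N)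
    (hC1 : ContDiffOn ℝ 1 (Pip P V) (Set.Ioo m M))
    (hL : Tendsto (deriv (Psip P V)) (nhdsWithin M (Set.Iio M)) (nhds 1))
    (n : ℕ) (hn : 1 ≤ n) (k : ℝ) (hk : 0 < k)
    (hlim : Tendsto (fun x : ℝ => (Psip P V x - x) / (M - x) ^ (n + 1))
      (nhdsWithin M (Set.Iio M)) (nhds (1 / k)))
    (R : ℝ → ℝ) (hRm : Monotone R) (hRr : ∀ x, R x ∈ Set.Icc m M)
    (hRlt : ∀ x, R x < M) (hRtop : Tendsto R atTop (nhds M))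
    (hRsol : SolvesCp P V σ N R) :
    Tendsto (fun x : ℝ => (M - R x) /
        ((((N:ℝ) / ((N:ℝ) - 1)) * ((n:ℝ) / k)) ^ (-(1:ℝ) / (n:ℝ)) *
          Real.log x ^ (-(1:ℝ) / (n:ℝ))))
      atTop (nhds 1) := by
  obtain ⟨hmM, hVae, _, _⟩ := id hsupp
  have hmonoP : ∀ y y', y ≤ y' → y' < M → Psip P V y ≤ Psip P V y' := by
    intro y y' hyy hy'
    have hy : y < M := lt_of_le_of_lt hyy hy'
    have h1 := Core16.psip_gen P V hVmeas hV hsupp hy' {ω | V ω > y}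
      (measurableSet_lt measurable_const hVmeas) (fun ω hω => lt_of_le_of_lt hyy hω)
    rw [Psip, div_le_iff₀ (Core16.pip_pos P V hsupp hy)]
    exact h1
  refine Core16.mid σ hσ (fun x => Psip P V (R x)) R (fun x y hxy => hmonoP _ _ (hRm hxy) (hRlt y))
    (∫ ω, V ω ∂P) M ?_ (fun x => Core16.psip_le P V hV hsupp (hRlt x)) N hN n hn k hk ?_ hRm hRlt hRtop hRsol
  · intro x
    have h1 := Core16.psip_gen P V hVmeas hV hsupp (hRlt x) Set.univ MeasurableSet.univ (Set.subset_univ _)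
    simpa using h1
  · exact hlim.comp (tendsto_nhdsWithin_iff.2 ⟨hRtop, Eventually.of_forall hRlt⟩)
end
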